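/- arXiv:2211.05210 — 7 statements merged into one kernel-verified Lean document; each statement's English description precedes it below -/
import Mathlib

section
/- Let X have the exponential distribution with parameter 1. If p/q ≥ 2, q ≥ 2 and t ≥ 0, then ‖X − t‖_p ≤ C₀·(p/q)·‖X − t‖_q, where C₀ = e^{W(1/e)}. -/
open MeasureTheory

/-- `‖X - t‖ₛ` for `X` exponential with parameter 1:
`(∫_0^∞ e^{-x} |x - t|^s dx)^{1/s}`. -/
noncomputable def expShiftNorm (s t : ℝ) : ℝ :=
  (∫ x in Set.Ioi (0 : ℝ), Real.exp (-x) * |x - t| ^ s) ^ (1 / s)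

/-- Stirling remainder. -/
noncomputable def stF (s : ℝ) : ℝ := Real.log (Real.Gamma (s + 1)) - (s + 1 / 2) * Real.log s + s

lemma logGamma_succ {y : ℝ} (hy : 0 < y) :
    (Real.log ∘ Real.Gamma) (y + 1) = (Real.log ∘ Real.Gamma) y + Real.log y := by
  simp only [Function.comp_apply]
  rw [Real.Gamma_add_one hy.ne', Real.log_mul hy.ne' (Real.Gamma_pos_of_pos hy).ne']
  ring

lemma stF_succ_le {s : ℝ} (hs : 0 < s) : stF (s + 1) ≤ stF s := by
  have h1 := logGamma_succ (y := s + 1) (by linarith)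
  simp only [Function.comp_apply] at h1
  have h2 := Real.le_log_one_add_of_nonneg (x := 1 / s) (by positivity)
  have h3 : Real.log (1 + 1 / s) = Real.log (s + 1) - Real.log s := by
    rw [← Real.log_div (by positivity) (by positivity)]
    congr 1
    field_simp
  have h4 : 2 * (1 / s) / (1 / s + 2) = 1 / (s + 1 / 2) := by field_simp; ring
  rw [h3, h4, div_le_iff₀ (by positivity)] at h2
  unfold stF
  rw [h1]
  nlinarith

lemma stF_add_nat_le {s : ℝ} (hs : 0 < s) (n : ℕ) : stF (s + n) ≤ stF s := by
  induction n with
  | zero => simp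
  | succ k ih =>
    have := stF_succ_le (s := s + k) (by positivity)
    push_cast
    rw [← add_assoc]
    linarith

lemma log_two_pi_ge : (1.82 : ℝ) ≤ Real.log (2 * Real.pi) := by
  rw [Real.log_mul (by norm_num) Real.pi_ne_zero]
  have h1 := Real.log_two_gt_d9
  have h2 : (1.13 : ℝ) ≤ Real.log Real.pi := by
    rw [Real.le_log_iff_exp_le Real.pi_pos]
    have h3 : Real.exp 1.13 = Real.exp 1 * Real.exp 0.13 := by
      rw [← Real.exp_add]; norm_num
    have h4 := Real.exp_bound_div_one_sub_of_interval (x := 0.13) (by norm_num) (by norm_num)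
    have h5 := Real.exp_one_lt_d9
    have h6 := Real.pi_gt_d2
    rw [h3]
    have h7 : (1 : ℝ) / (1 - 0.13) ≤ 1.15 := by norm_num
    have := Real.exp_pos 1
    nlinarith
  linarith

lemma stF_lower {q : ℝ} (hq : 2 ≤ q) : 0.9 ≤ stF q := by
  have h0 := stF_add_nat_le (s := q) (by linarith) 200
  obtain ⟨m, hm1, hm2⟩ : ∃ m : ℕ, (m : ℝ) < q + 200 ∧ q + 200 ≤ m + 1 := by
    have hc : ⌈q + 200⌉₊ ≠ 0 := by
      have : 0 < ⌈q + 200⌉₊ := Nat.ceil_pos.2 (by linarith)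
      omega
    obtain ⟨m, hm⟩ := Nat.exists_eq_succ_of_ne_zero hc
    refine ⟨m, ?_, ?_⟩
    · apply Nat.lt_ceil.1; omega
    · have := Nat.le_ceil (q + 200)
      rw [hm] at this
      push_cast at this
      exact this
  set θ := q + 200 - m with hθ
  have hm0 : (200 : ℝ) ≤ m := by linarith
  have hmn : 200 ≤ m := by exact_mod_cast hm0
  have hθ0 : 0 < θ := by linarith
  have hθ1 : θ ≤ 1 := by linarith
  have h1 := Real.BohrMollerup.f_add_nat_ge Real.convexOn_log_Gamma (fun {y} hy => logGamma_succ hy)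
    (n := m + 1) (by omega) hθ0
  simp only [Function.comp_apply] at h1
  push_cast at h1
  rw [Real.Gamma_nat_eq_factorial] at h1
  have h2 := Stirling.le_log_factorial_stirling (n := m) (by omega)
  have h3 : (m : ℝ) + 1 + θ = q + 200 + 1 := by rw [hθ]; ring
  rw [h3] at h1
  have hmpos : (0 : ℝ) < m := by linarith
  have h4 : Real.log (q + 200) ≤ Real.log m + θ / m := by
    have h5 : q + 200 = m * (1 + θ / m) := by field_simp; rw [hθ]; ring
    rw [h5, Real.log_mul hmpos.ne' (by positivity)]
    have := Real.log_le_sub_one_of_pos (x := 1 + θ / m) (by positivity)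
    linarith
  have h6 : (q + 200 + 1 / 2) * Real.log (q + 200) ≤ (q + 200 + 1 / 2) * (Real.log m + θ / m) :=
    mul_le_mul_of_nonneg_left h4 (by linarith)
  have h7 : (q + 200 + 1 / 2) * (θ / m) ≤ θ + 0.0075 := by
    have h8 : q + 200 = m + θ := by rw [hθ]; ring
    rw [h8, mul_div_assoc', div_le_iff₀ hmpos]
    nlinarith
  have h9 : (q + 200 + 1 / 2) * Real.log m = (m + θ + 1 / 2) * Real.log m := by
    rw [hθ]; ring
  have h10 := log_two_pi_ge
  have h11 : (m : ℝ) + 1 - 1 = m := by ring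
  rw [h11] at h1
  unfold stF at h0 ⊢
  push_cast at h0
  have h12 : q + 200 = m + θ := by rw [hθ]; ring
  nlinarith

lemma stF_upper {p : ℝ} (hp : 1 ≤ p) : stF p ≤ 1.11 := by
  obtain ⟨n, θ, h0, h1, hn⟩ : ∃ (n : ℕ) (θ : ℝ), 0 ≤ θ ∧ θ ≤ 1 ∧ p = 1 + θ + n := by
    refine ⟨⌊p - 1⌋₊, p - 1 - ⌊p - 1⌋₊, ?_, ?_, ?_⟩
    · have := Nat.floor_le (a := p - 1) (by linarith); linarith
    · have := Nat.lt_floor_add_one (p - 1); linarith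
    · ring
  rw [hn]
  refine (stF_add_nat_le (by linarith) n).trans ?_
  have h2 := logGamma_succ (y := 1 + θ) (by linarith)
  simp only [Function.comp_apply] at h2
  have h3 : Real.log (Real.Gamma (1 + θ)) ≤ 0 := by
    have := Real.convexOn_log_Gamma.2 (by simp : (1:ℝ) ∈ Set.Ioi 0)
      (by simp : (2:ℝ) ∈ Set.Ioi 0) (by linarith : 0 ≤ 1 - θ) h0 (by ring)
    simp only [smul_eq_mul, Function.comp_apply, Real.Gamma_one, Real.Gamma_two, Real.log_one] at this
    have h4 : (1 - θ) * 1 + θ * 2 = 1 + θ := by ring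
    rw [h4] at this
    linarith
  have h5 := Real.le_log_one_add_of_nonneg h0
  unfold stF
  rw [h2]
  have h6 : (θ + 1 / 2) * (2 * θ / (θ + 2)) ≤ (θ + 1 / 2) * Real.log (1 + θ) :=
    mul_le_mul_of_nonneg_left h5 (by linarith)
  have h7 : θ - 0.11 ≤ (θ + 1 / 2) * (2 * θ / (θ + 2)) := by
    rw [mul_div_assoc', le_div_iff₀ (by linarith)]
    nlinarith [sq_nonneg (θ - 0.445)]
  nlinarith

lemma w_bounds (w : ℝ) (hwe : w * Real.exp w = Real.exp (-1)) (hw : 0 < w) :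
    0.275 ≤ w ∧ w ≤ 0.28 := by
  have h0 : w * (Real.exp w * Real.exp 1) = 1 := by
    rw [← mul_assoc, hwe, ← Real.exp_add]; simp
  have h1 := Real.exp_one_lt_d9
  have h2 := Real.exp_one_gt_d9
  constructor
  · by_contra! h
    have h3 : Real.exp w ≤ 1.3297 := by
      have h4 : Real.exp w ≤ Real.exp 0.275 := Real.exp_le_exp.2 h.le
      have h5 : Real.exp 0.275 = Real.exp 0.06875 ^ 4 := by
        rw [← Real.exp_nat_mul]; norm_num
      have h6 := Real.exp_bound_div_one_sub_of_interval (x := 0.06875) (by norm_num) (by norm_num)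
      have h7 : Real.exp 0.06875 ^ 4 ≤ (1 / (1 - 0.06875)) ^ 4 :=
        pow_le_pow_left₀ (Real.exp_pos _).le h6 4
      have h8 : ((1 : ℝ) / (1 - 0.06875)) ^ 4 ≤ 1.3297 := by norm_num
      linarith
    have h9 : Real.exp w * Real.exp 1 ≤ 1.3297 * 2.7182818286 :=
      mul_le_mul h3 h1.le (Real.exp_pos _).le (by norm_num)
    nlinarith
  · by_contra! h
    have h3 : 1.3192 ≤ Real.exp w := by
      have h4 : Real.exp 0.28 ≤ Real.exp w := Real.exp_le_exp.2 h.le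
      have h5 := Real.quadratic_le_exp_of_nonneg (x := 0.28) (by norm_num)
      have h6 : (1.3192 : ℝ) ≤ 1 + 0.28 + 0.28 ^ 2 / 2 := by norm_num
      linarith
    have h9 : 1.3192 * 2.7182818283 ≤ Real.exp w * Real.exp 1 :=
      mul_le_mul h3 h2.le (by norm_num) (Real.exp_pos _).le
    nlinarith

lemma tail_integrable (s t : ℝ) (hs : 0 < s) :
    IntegrableOn (fun x => Real.exp (-x) * |x - t| ^ s) (Set.Ioi t) ∧
    ∫ x in Set.Ioi t, Real.exp (-x) * |x - t| ^ s = Real.exp (-t) * Real.Gamma (s + 1) := by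
  have hmp : MeasurePreserving (fun x : ℝ => x + t) volume volume :=
    measurePreserving_add_right volume t
  have hme : MeasurableEmbedding (fun x : ℝ => x + t) := measurableEmbedding_addRight t
  have hpre : (fun x : ℝ => x + t) ⁻¹' (Set.Ioi t) = Set.Ioi 0 := by
    ext x; simp
  have hG := Real.GammaIntegral_convergent (s := s + 1) (by linarith)
  have heq : Set.EqOn (fun x => Real.exp (-t) * (Real.exp (-x) * x ^ (s + 1 - 1)))
      ((fun x => Real.exp (-x) * |x - t| ^ s) ∘ (fun x : ℝ => x + t)) (Set.Ioi 0) := by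
    intro x hx
    have hx' : 0 < x := hx
    simp only [Function.comp_apply, add_sub_cancel_right]
    rw [abs_of_pos hx', neg_add, Real.exp_add]
    ring
  constructor
  · rw [← hmp.integrableOn_comp_preimage hme, hpre]
    exact IntegrableOn.congr_fun (hG.const_mul (Real.exp (-t))) heq measurableSet_Ioi
  · rw [← hmp.setIntegral_preimage_emb hme, hpre, Real.Gamma_eq_integral (by linarith),
      ← integral_const_mul]
    exact (setIntegral_congr_fun measurableSet_Ioi heq).symm

lemma head_integrable (s t : ℝ) (hs : 0 < s) :
    IntegrableOn (fun x => Real.exp (-x) * |x - t| ^ s) (Set.Ioc 0 t) := by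
  have : Continuous (fun x => Real.exp (-x) * |x - t| ^ s) := by
    refine (by fun_prop : Continuous fun x : ℝ => Real.exp (-x)).mul ?_
    exact (by fun_prop : Continuous fun x : ℝ => |x - t|).rpow_const (fun _ => Or.inr hs.le)
  exact this.integrableOn_Ioc

lemma full_integrable (s t : ℝ) (hs : 0 < s) (ht : 0 ≤ t) :
    IntegrableOn (fun x => Real.exp (-x) * |x - t| ^ s) (Set.Ioi 0) := by
  rw [← Set.Ioc_union_Ioi_eq_Ioi ht]
  exact (head_integrable s t hs).union (tail_integrable s t hs).1

lemma full_split (s t : ℝ) (hs : 0 < s) (ht : 0 ≤ t) :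
    ∫ x in Set.Ioi 0, Real.exp (-x) * |x - t| ^ s =
      (∫ x in Set.Ioc 0 t, Real.exp (-x) * |x - t| ^ s) + Real.exp (-t) * Real.Gamma (s + 1) := by
  rw [← Set.Ioc_union_Ioi_eq_Ioi ht, setIntegral_union (Set.Ioc_disjoint_Ioi le_rfl)
    measurableSet_Ioi (head_integrable s t hs) (tail_integrable s t hs).1, (tail_integrable s t hs).2]

lemma full_lower (s t : ℝ) (hs : 0 < s) (ht : 0 ≤ t) :
    Real.exp (-t) * Real.Gamma (s + 1) ≤ ∫ x in Set.Ioi 0, Real.exp (-x) * |x - t| ^ s := by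
  rw [full_split s t hs ht]
  have : 0 ≤ ∫ x in Set.Ioc 0 t, Real.exp (-x) * |x - t| ^ s :=
    setIntegral_nonneg measurableSet_Ioc (fun x _ => by positivity)
  linarith

lemma full_upper (s t : ℝ) (hs : 0 < s) (ht : 0 ≤ t) :
    ∫ x in Set.Ioi 0, Real.exp (-x) * |x - t| ^ s ≤ t ^ s + Real.exp (-t) * Real.Gamma (s + 1) := by
  rw [full_split s t hs ht]
  have hc : Continuous (fun x : ℝ => Real.exp (-x) * t ^ s) := by fun_prop
  have h1 : ∫ x in Set.Ioc 0 t, Real.exp (-x) * |x - t| ^ s ≤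
      ∫ x in Set.Ioc 0 t, Real.exp (-x) * t ^ s := by
    refine setIntegral_mono_on (head_integrable s t hs) hc.integrableOn_Ioc measurableSet_Ioc ?_
    intro x hx
    refine mul_le_mul_of_nonneg_left (Real.rpow_le_rpow (abs_nonneg _) ?_ hs.le) (Real.exp_pos _).le
    rw [abs_le]; constructor <;> linarith [hx.1, hx.2]
  have h2 : ∫ x in Set.Ioc 0 t, Real.exp (-x) * t ^ s ≤ t ^ s := by
    rw [integral_mul_const]
    have h3 : ∫ x in Set.Ioc 0 t, Real.exp (-x) ≤ ∫ x in Set.Ioi (0 : ℝ), Real.exp (-x) :=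
      setIntegral_mono_set (integrableOn_exp_neg_Ioi 0)
        (Filter.Eventually.of_forall fun x => (Real.exp_pos _).le)
        (Filter.Eventually.of_forall fun x hx => hx.1)
    rw [integral_exp_neg_Ioi_zero] at h3
    have := Real.rpow_nonneg ht s
    nlinarith
  linarith

lemma gamma_moment (k : ℕ) : IntegrableOn (fun x : ℝ => Real.exp (-x) * x ^ k) (Set.Ioi 0) ∧
    ∫ x in Set.Ioi (0 : ℝ), Real.exp (-x) * x ^ k = (k.factorial : ℝ) := by
  have h1 := Real.GammaIntegral_convergent (s := (k : ℝ) + 1) (by positivity)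
  have h2 := Real.Gamma_eq_integral (s := (k : ℝ) + 1) (by positivity)
  rw [Real.Gamma_nat_eq_factorial] at h2
  simp only [add_sub_cancel_right, Real.rpow_natCast] at h1 h2
  exact ⟨h1, h2.symm⟩

lemma full_jensen (q t : ℝ) (hq : 2 ≤ q) (ht : 0 ≤ t) :
    (1 + (t - 1) ^ 2) ^ (q / 2) ≤ ∫ x in Set.Ioi 0, Real.exp (-x) * |x - t| ^ q := by
  set c := 1 + (t - 1) ^ 2 with hc
  have hcpos : 0 < c := by positivity
  obtain ⟨i0, m0⟩ := gamma_moment 0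
  obtain ⟨i1, m1⟩ := gamma_moment 1
  obtain ⟨i2, m2⟩ := gamma_moment 2
  set A := c ^ (q / 2) with hA
  have hApos : 0 < A := Real.rpow_pos_of_pos hcpos _
  have hpt : ∀ x : ℝ, A * (1 + q / 2 * ((x - t) ^ 2 / c - 1)) ≤ |x - t| ^ q := by
    intro x
    have h1 := one_add_mul_self_le_rpow_one_add (s := (x - t) ^ 2 / c - 1)
      (by have : 0 ≤ (x - t) ^ 2 / c := by positivity
          linarith) (p := q / 2) (by linarith)
    have h2 : 1 + ((x - t) ^ 2 / c - 1) = (x - t) ^ 2 / c := by ring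
    rw [h2, Real.div_rpow (sq_nonneg _) hcpos.le, le_div_iff₀ hApos] at h1
    have h3 : ((x - t) ^ 2) ^ (q / 2) = |x - t| ^ q := by
      rw [← sq_abs, ← Real.rpow_natCast, ← Real.rpow_mul (abs_nonneg _)]
      congr 1; push_cast; ring
    rw [h3] at h1
    linarith
  set a0 := A * (1 + q / 2 * (t ^ 2 / c - 1)) with ha0
  set a1 := A * (q / 2 * (-2 * t / c)) with ha1
  set a2 := A * (q / 2 / c) with ha2
  have hint : IntegrableOn (fun x : ℝ => a0 * (Real.exp (-x) * x ^ 0) + a1 * (Real.exp (-x) * x ^ 1)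
      + a2 * (Real.exp (-x) * x ^ 2)) (Set.Ioi 0) :=
    ((i0.const_mul a0).add (i1.const_mul a1)).add (i2.const_mul a2)
  have hval : ∫ x in Set.Ioi (0 : ℝ), (a0 * (Real.exp (-x) * x ^ 0) + a1 * (Real.exp (-x) * x ^ 1)
      + a2 * (Real.exp (-x) * x ^ 2)) = A := by
    have i01 : IntegrableOn (fun x : ℝ => a0 * (Real.exp (-x) * x ^ 0) +
        a1 * (Real.exp (-x) * x ^ 1)) (Set.Ioi 0) := (i0.const_mul a0).add (i1.const_mul a1)
    rw [integral_add i01 (i2.const_mul a2),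
      integral_add (i0.const_mul a0) (i1.const_mul a1), integral_const_mul, integral_const_mul,
      integral_const_mul, m0, m1, m2, ha0, ha1, ha2]
    simp only [Nat.factorial]
    push_cast
    field_simp
    rw [hc]; ring
  rw [← hval]
  refine setIntegral_mono_on hint (full_integrable q t (by linarith) ht) measurableSet_Ioi ?_
  intro x _
  have := mul_le_mul_of_nonneg_left (hpt x) (Real.exp_pos (-x)).le
  refine le_trans (le_of_eq ?_) this
  rw [ha0, ha1, ha2]
  field_simp
  ring

/-- The core numerical inequality. -/
lemma core_ineq (w p q t y : ℝ) (hw1 : 0.275 ≤ w) (hw2 : w ≤ 0.28) (hq : 2 ≤ q)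
    (r : ℝ) (hr : 2 ≤ r) (hp : p = r * q)
    (h1 : q * w + (1 / 2 * Real.log q + 0.9) - t ≤ q * y)
    (h2 : t ≤ 1 + q * w * Real.exp y) :
    1 / 2 * Real.log p + 1.21 - t ≤ p * y := by
  have hq0 : 0 < q := by linarith
  have hlq : 0.6931 ≤ Real.log q := by
    have := Real.log_le_log (by norm_num) hq
    linarith [Real.log_two_gt_d9]
  have hz : 0.18 ≤ q * y := by
    by_contra! h
    have hy : y ≤ 0.18 / q := by rw [le_div_iff₀ hq0]; linarith
    have hz1 : 0.18 / q ≤ 0.09 := by rw [div_le_iff₀ hq0]; linarith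
    have hz0 : 0 < 0.18 / q := by positivity
    have h3 := Real.exp_le_exp.2 hy
    have h4 := Real.exp_bound_div_one_sub_of_interval hz0.le (by linarith)
    have h5 : 1 / (1 - 0.18 / q) ≤ 1 + (0.18 / q) * 1.1 := by
      rw [div_le_iff₀ (by linarith)]
      nlinarith
    have h6 : q * w * Real.exp y ≤ q * w * (1 + (0.18 / q) * 1.1) :=
      mul_le_mul_of_nonneg_left (by linarith) (by positivity)
    have h7 : q * w * (1 + (0.18 / q) * 1.1) = q * w + w * 0.198 := by field_simp; ring
    nlinarith
  have hlr : Real.log r ≤ 0.36 * r + 0.03 := by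
    have h3 := Real.log_le_sub_one_of_pos (x := 0.36 * r) (by positivity)
    rw [Real.log_mul (by norm_num) (by linarith)] at h3
    have h4 : -1.03 ≤ Real.log 0.36 := by
      rw [Real.le_log_iff_exp_le (by norm_num)]
      have h5 : Real.exp (-1.03) * (Real.exp 1 * Real.exp 0.03) = 1 := by
        rw [← Real.exp_add, ← Real.exp_add]; norm_num
      have h6 := Real.add_one_le_exp (0.03 : ℝ)
      have h7 := Real.exp_one_gt_d9
      have h8 : 2.7182818283 * (0.03 + 1) ≤ Real.exp 1 * Real.exp 0.03 :=
        mul_le_mul h7.le h6 (by norm_num) (Real.exp_pos _).le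
      have := Real.exp_pos (-1.03)
      nlinarith
    linarith
  rw [hp, Real.log_mul (by linarith) hq0.ne']
  have h8 : 0 ≤ (r - 1) * (q * y - 0.18) := mul_nonneg (by linarith) (by linarith)
  nlinarith

/-- If `p/q ≥ 2`, `q ≥ 2` and `t ≥ 0`, then `‖X - t‖_p ≤ C₀ (p/q) ‖X - t‖_q`,
where `X` is exponential with parameter 1 and `C₀ = e^{W(1/e)}`. -/
theorem expShiftNorm_le_of_large_ratio
    (w : ℝ) (hw : 0 < w) (hwe : w * Real.exp w = Real.exp (-1))
    (p q t : ℝ) (hratio : 2 ≤ p / q) (hq : 2 ≤ q) (ht : 0 ≤ t) :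
    expShiftNorm p t ≤ Real.exp w * (p / q) * expShiftNorm q t := by
  obtain ⟨hw1, hw2⟩ := w_bounds w hwe hw
  have hq0 : 0 < q := by linarith
  set r := p / q with hr
  have hpr : p = r * q := by rw [hr]; field_simp
  have hp : 4 ≤ p := by rw [hpr]; nlinarith
  have hp0 : 0 < p := by linarith
  have hr0 : 0 < r := by linarith
  set N := expShiftNorm q t with hN
  set I := ∫ x in Set.Ioi (0 : ℝ), Real.exp (-x) * |x - t| ^ q with hI
  have hNI : N = I ^ (1 / q) := rfl
  have hGq : 0 < Real.Gamma (q + 1) := Real.Gamma_pos_of_pos (by linarith)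
  have hGp : 0 < Real.Gamma (p + 1) := Real.Gamma_pos_of_pos (by linarith)
  have hlow := full_lower q t hq0 ht
  have hIpos : 0 < I := lt_of_lt_of_le (by positivity) hlow
  have hNpos : 0 < N := by rw [hNI]; positivity
  have hlogN : q * Real.log N = Real.log I := by
    rw [hNI, Real.log_rpow hIpos]; field_simp
  -- second moment bound
  have hN2 : 1 + (t - 1) ^ 2 ≤ N ^ 2 := by
    have hj := full_jensen q t hq ht
    have h1 : ((1 + (t - 1) ^ 2) ^ (q / 2)) ^ (2 / q) ≤ I ^ (2 / q) :=
      Real.rpow_le_rpow (by positivity) hj (by positivity)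
    rw [← Real.rpow_mul (by positivity)] at h1
    have h2 : q / 2 * (2 / q) = 1 := by field_simp
    rw [h2, Real.rpow_one] at h1
    have h3 : N ^ 2 = I ^ (2 / q) := by
      rw [hNI, ← Real.rpow_natCast, ← Real.rpow_mul hIpos.le]
      congr 1; push_cast; ring
    rw [h3]; exact h1
  have hNt : t - 1 ≤ N := by
    nlinarith
  have htN : t ^ 2 ≤ 2 * N ^ 2 := by nlinarith [sq_nonneg (t - 2)]
  -- logarithmic coordinates
  set y := Real.log N - Real.log q + 1 + w with hy
  have hlogw : Real.log w = -1 - w := by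
    have h1 := congrArg Real.log hwe
    rw [Real.log_mul hw.ne' (Real.exp_pos _).ne', Real.log_exp, Real.log_exp] at h1
    linarith
  have hey : q * w * Real.exp y = N := by
    have h1 : Real.exp y = N / (q * w) := by
      have h2 : y = Real.log (N / (q * w)) := by
        rw [Real.log_div hNpos.ne' (by positivity), Real.log_mul hq0.ne' hw.ne', hlogw, hy]
        ring
      rw [h2, Real.exp_log (by positivity)]
    rw [h1]; field_simp
  have hb1 : q * w + (1 / 2 * Real.log q + 0.9) - t ≤ q * y := by
    have h1 := stF_lower hq
    unfold stF at h1
    have h2 : -t + Real.log (Real.Gamma (q + 1)) ≤ Real.log I := by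
      have h3 := Real.log_le_log (by positivity) hlow
      rwa [Real.log_mul (Real.exp_pos _).ne' hGq.ne', Real.log_exp] at h3
    rw [← hlogN] at h2
    have h4 : q * y = q * Real.log N - q * Real.log q + q + q * w := by rw [hy]; ring
    linarith
  have hcore := core_ineq w p q t y hw1 hw2 hq r hratio hpr hb1 (by rw [hey]; linarith)
  set M := Real.exp w * r * N with hM
  have hMpos : 0 < M := by positivity
  have hlogM : p * Real.log M = p * Real.log p + p * y - p := by
    rw [hM, Real.log_mul (by positivity) hNpos.ne', Real.log_mul (Real.exp_pos _).ne' hr0.ne',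
      Real.log_exp, hr, Real.log_div hp0.ne' hq0.ne', hy]
    ring
  have hA : Real.exp (-t) * Real.Gamma (p + 1) ≤ 0.91 * M ^ p := by
    rw [← Real.log_le_log_iff (by positivity) (by positivity),
      Real.log_mul (Real.exp_pos _).ne' hGp.ne', Real.log_exp,
      Real.log_mul (by norm_num) (by positivity), Real.log_rpow hMpos, hlogM]
    have h1 := stF_upper (p := p) (by linarith)
    unfold stF at h1
    have h2 : -0.1 ≤ Real.log 0.91 := by
      have := Real.one_sub_inv_le_log_of_pos (x := 0.91) (by norm_num)
      have h3 : (-0.1 : ℝ) ≤ 1 - (0.91)⁻¹ := by norm_num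
      linarith
    linarith
  have hB : t ^ p ≤ 0.09 * M ^ p := by
    have hE : 2.98 ≤ Real.exp w ^ 4 := by
      have h1 : Real.exp w ^ 4 = Real.exp 1 * Real.exp (4 * w - 1) := by
        rw [← Real.exp_nat_mul, ← Real.exp_add]
        congr 1; push_cast; ring
      have h2 := Real.add_one_le_exp (4 * w - 1)
      have h3 := Real.exp_one_gt_d9
      have h4 : 2.7182818283 * 1.1 ≤ Real.exp 1 * Real.exp (4 * w - 1) :=
        mul_le_mul h3.le (by linarith) (by norm_num) (Real.exp_pos _).le
      rw [h1]
      norm_num at h4 ⊢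
      linarith
    have ht4 : t ^ 4 ≤ 0.09 * M ^ 4 := by
      have h1 : t ^ 4 ≤ 4 * N ^ 4 := by nlinarith [sq_nonneg t]
      have h2 : M ^ 4 = Real.exp w ^ 4 * r ^ 4 * N ^ 4 := by rw [hM]; ring
      have h3 : (16 : ℝ) ≤ r ^ 4 := by
        have := pow_le_pow_left₀ (by norm_num) hratio 4
        linarith
      have h4 : 2.98 * 16 ≤ Real.exp w ^ 4 * r ^ 4 :=
        mul_le_mul hE h3 (by norm_num) (by positivity)
      have h5 : 2.98 * 16 * N ^ 4 ≤ M ^ 4 := by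
        rw [h2]; exact mul_le_mul_of_nonneg_right h4 (by positivity)
      have h6 : 0 < N ^ 4 := by positivity
      linarith
    have htM : t ≤ M := by
      have : t ^ 4 ≤ M ^ 4 := by
        have : 0 < M ^ 4 := by positivity
        linarith
      exact le_of_pow_le_pow_left₀ (by norm_num) hMpos.le this
    have hs : ∀ x : ℝ, 0 ≤ x → x ^ p = x ^ 4 * x ^ (p - 4) := by
      intro x hx
      rw [← Real.rpow_natCast, ← Real.rpow_add_of_nonneg hx (by norm_num) (by linarith)]
      congr 1; push_cast; ring
    rw [hs t ht, hs M hMpos.le, ← mul_assoc]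
    exact mul_le_mul ht4 (Real.rpow_le_rpow ht htM (by linarith)) (Real.rpow_nonneg ht _)
      (by positivity)
  have hup := full_upper p t hp0 ht
  have hfin : ∫ x in Set.Ioi (0 : ℝ), Real.exp (-x) * |x - t| ^ p ≤ M ^ p := by linarith
  have hnn : 0 ≤ ∫ x in Set.Ioi (0 : ℝ), Real.exp (-x) * |x - t| ^ p :=
    setIntegral_nonneg measurableSet_Ioi (fun x _ => by positivity)
  have h1 : expShiftNorm p t ≤ (M ^ p) ^ (1 / p) :=
    Real.rpow_le_rpow hnn hfin (by positivity)
  rwa [← Real.rpow_mul hMpos.le, mul_one_div_cancel hp0.ne', Real.rpow_one] at h1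
end

section
/- Fix t > 0 and define I(s, t) = ∫_0^t e^{x−t}·x^s dx for s > 0. Then the function s ↦ t^{−s}·I(s, t) is decreasing on (0, ∞). -/
/-- For fixed `t > 0`, with `I(s, t) = ∫_0^t e^{x-t} x^s dx`, the function
`s ↦ t^{-s} I(s, t)` is decreasing on `(0, ∞)`. -/
theorem rpow_mul_I_strictAntiOn (t : ℝ) (ht : 0 < t) :
    StrictAntiOn (fun s : ℝ => t ^ (-s) * ∫ x in (0 : ℝ)..t, Real.exp (x - t) * x ^ s)
      (Set.Ioi (0 : ℝ)) := by
  intro a ha b hb hab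
  have ha' : (0 : ℝ) < a := ha
  have hb' : (0 : ℝ) < b := hb
  have key : ∀ s x : ℝ, 0 ≤ x →
      t ^ (-s) * (Real.exp (x - t) * x ^ s) = Real.exp (x - t) * (x / t) ^ s := by
    intro s x hx
    rw [Real.div_rpow hx ht.le, Real.rpow_neg ht.le]
    ring
  have cont : ∀ s : ℝ, 0 < s → ContinuousOn
      (fun x : ℝ => t ^ (-s) * (Real.exp (x - t) * x ^ s)) (Set.Icc 0 t) := by
    intro s hs
    have h := Real.continuous_rpow_const hs.le
    exact Continuous.continuousOn (by fun_prop)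
  simp only [← intervalIntegral.integral_const_mul]
  refine intervalIntegral.integral_lt_integral_of_continuousOn_of_le_of_exists_lt ht
    (cont b hb') (cont a ha') ?_ ⟨t / 2, ⟨by linarith, by linarith⟩, ?_⟩
  · intro x hx
    rw [key b x hx.1.le, key a x hx.1.le]
    exact mul_le_mul_of_nonneg_left (Real.rpow_le_rpow_of_exponent_ge (div_pos hx.1 ht)
      ((div_le_one ht).2 hx.2) hab.le) (Real.exp_pos _).le
  · rw [key b _ (by linarith), key a _ (by linarith)]
    exact mul_lt_mul_of_pos_left (Real.rpow_lt_rpow_of_exponent_gt (by positivity)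
      ((div_lt_one ht).2 (by linarith)) hab) (Real.exp_pos _)
end

section
/- Let X have the exponential distribution with parameter 1 and let t ≥ 0. If 1 ≤ q ≤ p ≤ 2q, then ‖X − t‖_p/‖X − t‖_q ≤ (p/q)·max((1 − e^{−t})^{−1/(2q)}, e^{t/(2q)}). -/
open MeasureTheory

lemma tail_aux (c s : ℝ) (hs : 0 < s) :
    IntegrableOn (fun x => Real.exp (-x) * |x - c| ^ s) (Set.Ioi c) ∧
    ∫ x in Set.Ioi c, Real.exp (-x) * |x - c| ^ s = Real.exp (-c) * Real.Gamma (s + 1) := by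
  have hmp := measurePreserving_sub_right (volume : Measure ℝ) c
  have hme : MeasurableEmbedding (fun x : ℝ => x - c) :=
    (Homeomorph.subRight c).measurableEmbedding
  have hpre : (fun x : ℝ => x - c) ⁻¹' (Set.Ioi 0) = Set.Ioi c := by
    ext x; simp
  have hG := Real.GammaIntegral_convergent (s := s + 1) (by linarith)
  have hE := Real.Gamma_eq_integral (s := s + 1) (by linarith)
  have key : ∀ x ∈ Set.Ioi c, Real.exp (-c) * (Real.exp (-(x - c)) * (x - c) ^ (s + 1 - 1))
      = Real.exp (-x) * |x - c| ^ s := by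
    intro x hx
    have : 0 < x - c := sub_pos.mpr hx
    rw [abs_of_pos this, ← mul_assoc, ← Real.exp_add]
    congr 2 <;> ring_nf
  constructor
  · have h1 := (hmp.integrableOn_comp_preimage hme).mpr hG
    rw [hpre] at h1
    refine IntegrableOn.congr_fun (h1.const_mul (Real.exp (-c))) ?_ measurableSet_Ioi
    intro x hx
    exact key x hx
  · rw [← setIntegral_congr_fun measurableSet_Ioi key, integral_const_mul, hE,
      ← hmp.setIntegral_preimage_emb hme _ (Set.Ioi 0), hpre]

lemma gamma_lower (q : ℝ) (hq : 1 ≤ q) : q ^ q * Real.exp (1 - q) ≤ Real.Gamma (q + 1) := by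
  have hq0 : 0 < q := by linarith
  have h0 := tail_aux 0 q hq0
  have h1 := tail_aux (q - 1) 1 one_pos
  have hsub : Set.Ioi (q - 1) ⊆ Set.Ioi (0 : ℝ) := Set.Ioi_subset_Ioi (by linarith)
  have hG2 : Real.Gamma (1 + 1) = 1 := by rw [one_add_one_eq_two]; exact Real.Gamma_two
  have e1 : Real.Gamma (q + 1) = ∫ x in Set.Ioi 0, Real.exp (-x) * |x - 0| ^ q := by
    rw [h0.2]; simp
  rw [e1]
  calc q ^ q * Real.exp (1 - q)
      = ∫ x in Set.Ioi (q - 1), q ^ q * (Real.exp (-x) * |x - (q - 1)| ^ (1 : ℝ)) := by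
        rw [integral_const_mul, h1.2, hG2]; ring_nf
    _ ≤ ∫ x in Set.Ioi (q - 1), Real.exp (-x) * |x - 0| ^ q := by
        refine setIntegral_mono_on (h1.1.const_mul _) (h0.1.mono_set hsub) measurableSet_Ioi ?_
        intro x hx
        have hx' : 0 < x - (q - 1) := sub_pos.mpr hx
        have hx0 : 0 < x := hsub hx
        rw [Real.rpow_one, abs_of_pos hx', sub_zero, abs_of_pos hx0]
        have hb := one_add_mul_self_le_rpow_one_add (s := x / q - 1)
          (by have : 0 < x / q := by positivity
              linarith) hq
        have e : 1 + q * (x / q - 1) = x - (q - 1) := by field_simp; ring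
        rw [e, add_sub_cancel, Real.div_rpow hx0.le hq0.le, le_div_iff₀ (by positivity)] at hb
        have := mul_le_mul_of_nonneg_left hb (Real.exp_pos (-x)).le
        linarith
    _ ≤ _ := by
        refine setIntegral_mono_set h0.1 ?_ hsub.eventuallyLE
        exact Filter.Eventually.of_forall fun x => by simp only [Pi.zero_apply]; positivity

lemma gamma_ratio (q r : ℝ) (hq : 1 ≤ q) (hr : 1 ≤ r) :
    Real.Gamma (q * r + 1) ≤ r ^ (q * r) * Real.Gamma (q + 1) ^ r := by
  have hq0 : 0 < q := by linarith
  have hr0 : 0 < r := by linarith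
  set M := q ^ q * Real.exp (-q) with hM
  have hM0 : 0 < M := by positivity
  have hG0 : 0 < Real.Gamma (q + 1) := Real.Gamma_pos_of_pos (by linarith)
  have h1 := Real.integral_rpow_mul_exp_neg_mul_Ioi (a := q * r + 1) (r := r) (by positivity) hr0
  have hi := Real.GammaIntegral_convergent (s := q + 1) (by linarith)
  have h2 : ∫ y in Set.Ioi (0 : ℝ), y ^ (q * r + 1 - 1) * Real.exp (-(r * y)) ≤
      ∫ y in Set.Ioi (0 : ℝ), M ^ (r - 1) * (Real.exp (-y) * y ^ (q + 1 - 1)) := by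
    refine integral_mono_of_nonneg ?_ (hi.const_mul _) ?_
    · refine (ae_restrict_iff' measurableSet_Ioi).mpr (Filter.Eventually.of_forall fun y hy => ?_)
      have : (0 : ℝ) < y := hy
      simp only [Pi.zero_apply]; positivity
    · refine (ae_restrict_iff' measurableSet_Ioi).mpr (Filter.Eventually.of_forall fun y hy => ?_)
      have hy : (0 : ℝ) < y := hy
      simp only [add_sub_cancel_right]
      have hg0 : 0 < Real.exp (-y) * y ^ q := by positivity
      have hg : Real.exp (-y) * y ^ q ≤ M := by
        have a1 : y / q ≤ Real.exp (y / q - 1) := by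
          have := Real.add_one_le_exp (y / q - 1); linarith
        have a2 := Real.rpow_le_rpow (by positivity) a1 hq0.le
        rw [← Real.exp_mul, Real.div_rpow hy.le hq0.le, div_le_iff₀ (by positivity)] at a2
        have a3 := mul_le_mul_of_nonneg_left a2 (Real.exp_pos (-y)).le
        rw [← mul_assoc, ← Real.exp_add] at a3
        have e : -y + (y / q - 1) * q = -q := by field_simp; ring
        rw [e] at a3
        rw [hM]; linarith
      have e : y ^ (q * r) * Real.exp (-(r * y)) = (Real.exp (-y) * y ^ q) ^ r := by
        rw [Real.mul_rpow (by positivity) (by positivity), ← Real.exp_mul, ← Real.rpow_mul hy.le]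
        ring_nf
      rw [e]
      calc (Real.exp (-y) * y ^ q) ^ r
          = (Real.exp (-y) * y ^ q) ^ (r - 1) * (Real.exp (-y) * y ^ q) := by
            rw [← Real.rpow_add_one hg0.ne']; simp
        _ ≤ _ := by
            gcongr
  rw [h1, integral_const_mul, ← Real.Gamma_eq_integral (by linarith), one_div,
    Real.inv_rpow hr0.le, inv_mul_le_iff₀ (by positivity), Real.rpow_add_one hr0.ne'] at h2
  have h3 : r * M ^ (r - 1) ≤ Real.Gamma (q + 1) ^ (r - 1) := by
    have b1 : r ≤ Real.exp 1 ^ (r - 1) := by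
      rw [← Real.exp_mul]; have := Real.add_one_le_exp (r - 1); simp; linarith
    have b2 : Real.exp 1 * M ≤ Real.Gamma (q + 1) := by
      have := gamma_lower q hq
      rw [sub_eq_add_neg, Real.exp_add] at this
      rw [hM]; linarith
    calc r * M ^ (r - 1) ≤ Real.exp 1 ^ (r - 1) * M ^ (r - 1) := by gcongr
      _ = (Real.exp 1 * M) ^ (r - 1) := by rw [Real.mul_rpow (by positivity) hM0.le]
      _ ≤ _ := by gcongr
  have h4 : Real.Gamma (q + 1) ^ r = Real.Gamma (q + 1) ^ (r - 1) * Real.Gamma (q + 1) := by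
    rw [← Real.rpow_add_one hG0.ne']; simp
  rw [h4]
  calc _ ≤ _ := h2
    _ = r ^ (q * r) * ((r * M ^ (r - 1)) * Real.Gamma (q + 1)) := by ring
    _ ≤ _ := by gcongr

lemma head_lower (t q : ℝ) (hq : 1 ≤ q) (ht : 0 < t) :
    (1 - Real.exp (-t)) * (t / 2) ^ q ≤ ∫ x in (0 : ℝ)..t, Real.exp (-x) * |x - t| ^ q := by
  have hq0 : 0 < q := by linarith
  set c := t / 2 with hc
  have hc0 : 0 < c := by positivity
  have e : (1 - Real.exp (-t)) * c ^ q = ∫ x in (0 : ℝ)..t,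
      (Real.exp (-x) * c ^ q + q * c ^ (q - 1) * Real.exp (-c) * (c - x)) := by
    rw [intervalIntegral.integral_add (Continuous.intervalIntegrable (by fun_prop) _ _)
      (Continuous.intervalIntegrable (by fun_prop) _ _), intervalIntegral.integral_mul_const,
      intervalIntegral.integral_const_mul,
      intervalIntegral.integral_sub (Continuous.intervalIntegrable (by fun_prop) _ _)
      (Continuous.intervalIntegrable (by fun_prop) _ _)]
    have : ∫ x in (0 : ℝ)..t, Real.exp (-x) = 1 - Real.exp (-t) := by
      simp [intervalIntegral.integral_comp_neg (fun x => Real.exp x)]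
    rw [this]
    simp [hc]
    right; ring
  rw [e]
  refine intervalIntegral.integral_mono_on ht.le (Continuous.intervalIntegrable (by fun_prop) _ _)
    (Continuous.intervalIntegrable ?_ _ _) ?_
  · exact (by fun_prop : Continuous fun x : ℝ => Real.exp (-x)).mul
      ((by fun_prop : Continuous fun x : ℝ => |x - t|).rpow_const fun _ => Or.inr hq0.le)
  intro x hx
  have hx2 : 0 ≤ t - x := by linarith [hx.2]
  rw [abs_sub_comm, abs_of_nonneg hx2]
  have hb := one_add_mul_self_le_rpow_one_add (s := (t - x) / c - 1)
    (by have : 0 ≤ (t - x) / c := by positivity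
        linarith) hq
  rw [add_sub_cancel, Real.div_rpow hx2 hc0.le, le_div_iff₀ (by positivity)] at hb
  have e2 : c ^ q = c ^ (q - 1) * c := by rw [← Real.rpow_add_one hc0.ne']; simp
  have e3 : (1 + q * ((t - x) / c - 1)) * c ^ q = c ^ q + q * c ^ (q - 1) * (c - x) := by
    rw [e2]; field_simp; rw [hc]; ring
  rw [e3] at hb
  have h1 := mul_le_mul_of_nonneg_left hb (Real.exp_pos (-x)).le
  have h2 : Real.exp (-c) * (c - x) ≤ Real.exp (-x) * (c - x) := by
    rcases le_total x c with h | h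
    · exact mul_le_mul_of_nonneg_right (Real.exp_le_exp.mpr (by linarith)) (by linarith)
    · exact mul_le_mul_of_nonpos_right (Real.exp_le_exp.mpr (by linarith)) (by linarith)
  have h3 := mul_le_mul_of_nonneg_left h2 (by positivity : 0 ≤ q * c ^ (q - 1))
  linarith

lemma head_cont (t q : ℝ) (hq : 0 < q) : Continuous fun x : ℝ => Real.exp (-x) * |x - t| ^ q :=
  (by fun_prop : Continuous fun x : ℝ => Real.exp (-x)).mul
      ((by fun_prop : Continuous fun x : ℝ => |x - t|).rpow_const fun _ => Or.inr hq.le)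

lemma head_ratio (t q r : ℝ) (hq : 1 ≤ q) (hr : 1 ≤ r) (ht : 0 < t) :
    ∫ x in (0 : ℝ)..t, Real.exp (-x) * |x - t| ^ (q * r) ≤
      r ^ (q * r) * ((1 - Real.exp (-t)) ^ (1 - r) *
        (∫ x in (0 : ℝ)..t, Real.exp (-x) * |x - t| ^ q) ^ r) := by
  have hq0 : 0 < q := by linarith
  have hr0 : 0 < r := by linarith
  have hl := head_lower t q hq ht
  set I := ∫ x in (0 : ℝ)..t, Real.exp (-x) * |x - t| ^ q with hI
  have ha : 0 < 1 - Real.exp (-t) := by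
    have : Real.exp (-t) < 1 := by rw [Real.exp_lt_one_iff]; linarith
    linarith
  set a := 1 - Real.exp (-t)
  have hI0 : 0 < I := lt_of_lt_of_le (by positivity) hl
  have h1 : ∫ x in (0 : ℝ)..t, Real.exp (-x) * |x - t| ^ (q * r) ≤ t ^ (q * (r - 1)) * I := by
    rw [hI, ← intervalIntegral.integral_const_mul]
    refine intervalIntegral.integral_mono_on ht.le
      ((head_cont t (q * r) (by positivity)).intervalIntegrable _ _)
      (((head_cont t q hq0).const_mul _).intervalIntegrable _ _) ?_
    intro x hx
    have hx2 : 0 ≤ t - x := by linarith [hx.2]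
    rw [abs_sub_comm, abs_of_nonneg hx2]
    have e : (t - x) ^ (q * r) = (t - x) ^ (q * (r - 1)) * (t - x) ^ q := by
      rw [← Real.rpow_add_of_nonneg hx2 (mul_nonneg hq0.le (by linarith)) hq0.le]; ring_nf
    have : (t - x) ^ (q * (r - 1)) ≤ t ^ (q * (r - 1)) :=
      Real.rpow_le_rpow hx2 (by linarith [hx.1]) (mul_nonneg hq0.le (by linarith))
    rw [e]
    calc _ = (t - x) ^ (q * (r - 1)) * (Real.exp (-x) * (t - x) ^ q) := by ring
      _ ≤ _ := by gcongr
  have h2 : (t / 2) ^ (q * (r - 1)) ≤ a ^ (1 - r) * I ^ (r - 1) := by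
    have h := Real.rpow_le_rpow (by positivity) hl (by linarith : 0 ≤ r - 1)
    rw [Real.mul_rpow ha.le (by positivity), ← Real.rpow_mul (by positivity)] at h
    have e : a ^ (1 - r) = (a ^ (r - 1))⁻¹ := by rw [← Real.rpow_neg ha.le]; ring_nf
    rw [e, le_inv_mul_iff₀ (by positivity)]
    exact h
  have h3 : (2 : ℝ) ^ (q * (r - 1)) ≤ r ^ (q * r) := by
    rw [Real.rpow_def_of_pos two_pos, Real.rpow_def_of_pos hr0, Real.exp_le_exp]
    have l1 : Real.log 2 ≤ 1 := by have := Real.log_le_sub_one_of_pos two_pos; linarith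
    have l2 : 1 - r⁻¹ ≤ Real.log r := Real.one_sub_inv_le_log_of_pos hr0
    have l3 : r - 1 ≤ Real.log r * r := by
      have := mul_le_mul_of_nonneg_right l2 hr0.le
      rwa [sub_mul, inv_mul_cancel₀ hr0.ne', one_mul] at this
    calc Real.log 2 * (q * (r - 1)) ≤ 1 * (q * (r - 1)) :=
          mul_le_mul_of_nonneg_right l1 (mul_nonneg hq0.le (by linarith))
      _ = q * (r - 1) := one_mul _
      _ ≤ q * (Real.log r * r) := by gcongr
      _ = _ := by ring
  have e4 : I ^ r = I ^ (r - 1) * I := by rw [← Real.rpow_add_one hI0.ne']; simp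
  have e5 : t ^ (q * (r - 1)) = 2 ^ (q * (r - 1)) * (t / 2) ^ (q * (r - 1)) := by
    rw [← Real.mul_rpow (by positivity) (by positivity)]; congr 1; ring
  calc _ ≤ _ := h1
    _ = (2 ^ (q * (r - 1)) * (t / 2) ^ (q * (r - 1))) * I := by rw [e5]
    _ ≤ (r ^ (q * r) * (a ^ (1 - r) * I ^ (r - 1))) * I := by gcongr
    _ = _ := by rw [e4]; ring

lemma split_aux (t s : ℝ) (hs : 0 < s) (ht : 0 ≤ t) :
    ∫ x in Set.Ioi (0 : ℝ), Real.exp (-x) * |x - t| ^ s =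
      (∫ x in (0 : ℝ)..t, Real.exp (-x) * |x - t| ^ s) + Real.exp (-t) * Real.Gamma (s + 1) := by
  rw [← (tail_aux t s hs).2, intervalIntegral.integral_of_le ht,
    ← setIntegral_union (Set.Ioc_disjoint_Ioi le_rfl) measurableSet_Ioi
      ((intervalIntegrable_iff_integrableOn_Ioc_of_le ht).mp
        ((head_cont t s hs).intervalIntegrable _ _)) (tail_aux t s hs).1,
    Set.Ioc_union_Ioi_eq_Ioi ht]

lemma pow_aux (a K q r : ℝ) (hq : 1 ≤ q) (hr2 : r ≤ 2) (hr : 1 ≤ r) (ha : 0 < a) (ha1 : a ≤ 1)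
    (hK : a ^ (-1 / (2 * q)) ≤ K) : a ^ (1 - r) ≤ K ^ (q * r) := by
  have hq0 : 0 < q := by linarith
  calc a ^ (1 - r) ≤ a ^ (-1 / (2 * q) * (q * r)) := by
        apply Real.rpow_le_rpow_of_exponent_ge ha ha1
        have : -1 / (2 * q) * (q * r) = - r / 2 := by field_simp
        rw [this]; linarith
    _ = (a ^ (-1 / (2 * q))) ^ (q * r) := Real.rpow_mul ha.le _ _
    _ ≤ _ := Real.rpow_le_rpow (by positivity) hK (by positivity)

/-- If `X` is exponential with parameter 1, `t ≥ 0` and `1 ≤ q ≤ p ≤ 2q`, then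
`‖X - t‖_p / ‖X - t‖_q ≤ (p/q) max((1 - e^{-t})^{-1/(2q)}, e^{t/(2q)})`. -/
theorem expShiftNorm_ratio_le_max
    (p q t : ℝ) (hq : 1 ≤ q) (hqp : q ≤ p) (hp2q : p ≤ 2 * q) (ht : 0 ≤ t) :
    expShiftNorm p t / expShiftNorm q t ≤
      (p / q) * max ((1 - Real.exp (-t)) ^ (-1 / (2 * q))) (Real.exp (t / (2 * q))) := by
  have hq0 : 0 < q := by linarith
  have hp0 : 0 < p := by linarith
  obtain ⟨r, rfl⟩ : ∃ r, p = q * r := ⟨p / q, by field_simp⟩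
  have hr : 1 ≤ r := by by_contra h; push Not at h; nlinarith
  have hr2 : r ≤ 2 := by by_contra h; push Not at h; nlinarith
  have hr0 : 0 < r := by linarith
  have hrq : q * r / q = r := by field_simp
  rw [hrq]
  set K := max ((1 - Real.exp (-t)) ^ (-1 / (2 * q))) (Real.exp (t / (2 * q))) with hK
  have hK0 : 0 < K := lt_of_lt_of_le (Real.exp_pos _) (le_max_right _ _)
  unfold expShiftNorm
  rw [split_aux t _ hp0 ht, split_aux t _ hq0 ht]
  set I := ∫ x in (0 : ℝ)..t, Real.exp (-x) * |x - t| ^ q with hI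
  have hI0 : 0 ≤ I := intervalIntegral.integral_nonneg ht fun x _ => by positivity
  have hG0 : 0 < Real.Gamma (q + 1) := Real.Gamma_pos_of_pos (by linarith)
  have hGp : 0 < Real.Gamma (q * r + 1) := Real.Gamma_pos_of_pos (by linarith)
  have hIp0 : 0 ≤ ∫ x in (0 : ℝ)..t, Real.exp (-x) * |x - t| ^ (q * r) :=
    intervalIntegral.integral_nonneg ht fun x _ => by positivity
  have hA : ∫ x in (0 : ℝ)..t, Real.exp (-x) * |x - t| ^ (q * r) ≤
      r ^ (q * r) * (K ^ (q * r) * I ^ r) := by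
    rcases ht.eq_or_lt with h | h
    · rw [← h, intervalIntegral.integral_same]; positivity
    · refine (head_ratio t q r hq hr h).trans ?_
      have : Real.exp (-t) < 1 := by rw [Real.exp_lt_one_iff]; linarith
      have := pow_aux (1 - Real.exp (-t)) K q r hq hr2 hr (by linarith)
        (by linarith [Real.exp_pos (-t)]) (le_max_left _ _)
      gcongr
  have hB : Real.exp (-t) * Real.Gamma (q * r + 1) ≤
      r ^ (q * r) * (K ^ (q * r) * (Real.exp (-t) * Real.Gamma (q + 1)) ^ r) := by
    have h1 := pow_aux (Real.exp (-t)) K q r hq hr2 hr (Real.exp_pos _)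
      (Real.exp_le_one_iff.mpr (by linarith)) (by
        rw [← Real.exp_mul]
        have : -t * (-1 / (2 * q)) = t / (2 * q) := by ring
        rw [this]; exact le_max_right _ _)
    have e : Real.exp (-t) = Real.exp (-t) ^ (1 - r) * Real.exp (-t) ^ r := by
      rw [← Real.rpow_add (Real.exp_pos _)]; simp
    calc Real.exp (-t) * Real.Gamma (q * r + 1)
        ≤ Real.exp (-t) * (r ^ (q * r) * Real.Gamma (q + 1) ^ r) := by
          gcongr; exact gamma_ratio q r hq hr
      _ = (Real.exp (-t) ^ (1 - r) * Real.exp (-t) ^ r) *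
            (r ^ (q * r) * Real.Gamma (q + 1) ^ r) := by rw [← e]
      _ ≤ (K ^ (q * r) * Real.exp (-t) ^ r) * (r ^ (q * r) * Real.Gamma (q + 1) ^ r) := by
          gcongr
      _ = _ := by rw [Real.mul_rpow (Real.exp_pos _).le hG0.le]; ring
  set J := Real.exp (-t) * Real.Gamma (q + 1) with hJ
  have hJ0 : 0 < J := by positivity
  have hIJ : 0 < I + J := by positivity
  rw [div_le_iff₀ (by positivity)]
  have hsum := Real.add_rpow_le_rpow_add hI0 hJ0.le hr
  have hfin : (∫ x in (0 : ℝ)..t, Real.exp (-x) * |x - t| ^ (q * r)) +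
      Real.exp (-t) * Real.Gamma (q * r + 1) ≤ (r * K * (I + J) ^ (1 / q)) ^ (q * r) := by
    have e : (r * K * (I + J) ^ (1 / q)) ^ (q * r) =
        r ^ (q * r) * (K ^ (q * r) * (I + J) ^ r) := by
      rw [Real.mul_rpow (by positivity) (by positivity), Real.mul_rpow hr0.le hK0.le,
        ← Real.rpow_mul hIJ.le, mul_assoc]
      congr 3; field_simp
    rw [e]
    calc _ ≤ r ^ (q * r) * (K ^ (q * r) * (I ^ r + J ^ r)) := by linarith
      _ ≤ _ := by gcongr
  calc _ ≤ ((r * K * (I + J) ^ (1 / q)) ^ (q * r)) ^ (1 / (q * r)) :=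
        Real.rpow_le_rpow (by positivity) hfin (by positivity)
    _ = _ := by
        rw [← Real.rpow_mul (by positivity), mul_one_div_cancel hp0.ne', Real.rpow_one]
end

section
/- Let X have the exponential distribution with parameter 1 and let t = r·q/e. If 2 ≤ q ≤ p ≤ 2q and 0 ≤ r ≤ 2r₀, where r₀ = e·W(1/e), then ‖X − t‖_p ≤ C₀·(p/q)·‖X − t‖_q, where C₀ = e^{W(1/e)} = 1/r₀. -/
open MeasureTheory

open Real in
lemma gam_base (q : ℝ) (h2 : 2 ≤ q) (h3 : q ≤ 3) : 1 + q * log q - q ≤ log (Gamma (q+1)) := by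
  have hq : 0 < q := by linarith
  have hc := Real.convexOn_log_Gamma
  have h := @hc.2 2 (by simp) (q+1) (by simp; linarith) ((q-2)/(q-1)) (1/(q-1))
    (div_nonneg (by linarith) (by linarith)) (div_nonneg (by linarith) (by linarith))
    (by rw [← add_div]; rw [div_eq_one_iff_eq] <;> linarith)
  have hq1 : q - 1 ≠ 0 := by linarith
  have e3 : ((q-2)/(q-1)) • (2:ℝ) + (1/(q-1)) • (q+1) = 3 := by
    simp only [smul_eq_mul]; field_simp; ring
  rw [e3] at h
  simp only [Function.comp, Gamma_two, log_one, smul_eq_mul] at h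
  have g3 : Gamma 3 = 2 := by
    have := Real.Gamma_add_one (s := 2) (by norm_num)
    rw [Gamma_two, show (2:ℝ)+1 = 3 by norm_num, mul_one] at this; exact this
  rw [g3] at h
  have h' : (q-1) * log 2 ≤ log (Gamma (q+1)) := by
    have := mul_le_mul_of_nonneg_left h (by linarith : 0 ≤ q-1)
    have e : (q-1) * ((q - 2) / (q - 1) * 0 + 1 / (q - 1) * log (Gamma (q + 1))) = log (Gamma (q+1)) := by
      field_simp; ring
    linarith
  have l3 : 3 * log 3 ≤ 2 + 2 * log 2 := by
    have h1 : log ((3:ℝ)^3) ≤ log (exp 1 ^ 2 * 2^2) := by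
      apply log_le_log (by norm_num)
      nlinarith [Real.exp_one_gt_d9]
    rw [log_mul (by positivity) (by positivity), log_pow, log_pow, log_pow, log_exp] at h1
    push_cast at h1; linarith
  have lq : log q ≤ log 3 + (q/3 - 1) := by
    have := Real.log_le_sub_one_of_pos (x := q/3) (by positivity)
    rw [log_div (by linarith) (by norm_num)] at this; linarith
  have lq' : log q ≤ (2 + 2*log 2)/3 + (q/3-1) := by linarith
  have := mul_le_mul_of_nonneg_left lq' hq.le
  have l2 : log 2 < 1 := by linarith [Real.log_two_lt_d9]
  nlinarith [mul_nonneg (by linarith : 0 ≤ 1 - log 2) (by linarith : 0 ≤ 3 - q), mul_nonneg (by linarith : 0 ≤ q-2) (by linarith : 0 ≤ 3 - q)]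

open Real in
lemma gam_ind (n : ℕ) : ∀ q : ℝ, 2 ≤ q → q ≤ 3 + n → 1 + q * log q - q ≤ log (Gamma (q+1)) := by
  induction n with
  | zero => intro q h h'; exact gam_base q h (by simpa using h')
  | succ n ih =>
    intro q h h'
    by_cases h3 : q ≤ 3
    · exact gam_base q h h3
    push Not at h3
    push_cast at h'
    have := ih (q-1) (by linarith) (by linarith)
    rw [Real.Gamma_add_one (by linarith), log_mul (by linarith) (Gamma_pos_of_pos (by linarith)).ne']
    rw [sub_add_cancel] at this
    have hl := Real.log_le_sub_one_of_pos (x := q/(q-1)) (div_pos (by linarith) (by linarith))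
    rw [log_div (by linarith) (by linarith)] at hl
    have e : q/(q-1) - 1 = 1/(q-1) := by
      have : q - 1 ≠ 0 := by linarith
      field_simp; ring
    rw [e, le_div_iff₀ (by linarith)] at hl
    linarith

open Real in
lemma gam_low (q : ℝ) (h : 2 ≤ q) : exp 1 * (q / exp 1) ^ q ≤ Gamma (q+1) := by
  obtain ⟨n, hn⟩ := exists_nat_ge q
  have := gam_ind n q h (by linarith)
  have hG : 0 < Gamma (q+1) := Gamma_pos_of_pos (by linarith)
  rw [← log_le_log_iff (by positivity) hG, log_mul (by positivity) (by positivity), log_rpow (by positivity),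
    log_div (by linarith) (by positivity), log_exp]
  linarith

open Real in
lemma gam_up (p q : ℝ) (hq : 2 ≤ q) (hqp : q ≤ p) :
    Gamma (p+1) ≤ (p/q)^p * Gamma (q+1) ^ (p/q) := by
  have hq0 : 0 < q := by linarith
  have hp0 : 0 < p := by linarith
  have hA : 0 < Gamma (q+1) := Gamma_pos_of_pos (by linarith)
  have key : ∀ x ∈ Set.Ioi (0:ℝ), exp (-x) * x ^ (p+1-1) ≤
      (p / exp 1)^(p-q) * (x^(q+1-1) * exp (-((q/p)*x))) := by
    intro x hx
    have hx : 0 < x := hx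
    have hl := Real.log_le_sub_one_of_pos (x := x/p) (by positivity)
    rw [log_div hx.ne' hp0.ne'] at hl
    rw [← log_le_log_iff (by positivity) (by positivity), log_mul (by positivity) (by positivity),
      log_mul (by positivity) (by positivity), log_mul (by positivity) (by positivity), log_exp, log_exp,
      log_rpow (by positivity), log_rpow (by positivity), log_rpow (by positivity), log_div (by positivity) (by positivity), log_exp]
    have := mul_le_mul_of_nonneg_left hl (by linarith : 0 ≤ p - q)
    have e : (p-q) * (x/p-1) = x - q/p*x - (p-q) := by field_simp
    rw [e] at this
    linarith
  have h1 : Gamma (p+1) ≤ (p / exp 1)^(p-q) * ((1/(q/p))^(q+1) * Gamma (q+1)) := by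
    rw [Gamma_eq_integral (by linarith : 0 < p+1), ← integral_rpow_mul_exp_neg_mul_Ioi (by linarith) (by positivity : 0 < q/p),
      ← integral_const_mul]
    apply setIntegral_mono_on _ _ measurableSet_Ioi key
    · exact GammaIntegral_convergent (by linarith)
    · apply Integrable.const_mul
      have := integrableOn_rpow_mul_exp_neg_mul_rpow (p := 1) (s := q+1-1) (b := q/p) (by linarith) (by norm_num) (by positivity)
      simpa [IntegrableOn] using this
  refine h1.trans ?_
  have hlow := gam_low q hq
  rw [← log_le_log_iff (by positivity) hA, log_mul (by positivity) (by positivity), log_rpow (by positivity),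
    log_div (by linarith) (by positivity), log_exp] at hlow
  rw [← log_le_log_iff (by positivity) (by positivity), log_mul (by positivity) (by positivity),
      log_mul (by positivity) (by positivity), log_mul (by positivity) (by positivity),
      log_rpow (by positivity), log_rpow (by positivity), log_rpow (by positivity), log_rpow (by positivity), one_div_div, log_div (by positivity) (by positivity), log_div (by positivity) (by positivity), log_exp]
  have hl := Real.log_le_sub_one_of_pos (x := p/q) (by positivity)
  rw [log_div hp0.ne' hq0.ne'] at hl
  have h1 : 0 ≤ p/q - 1 := by rw [sub_nonneg, le_div_iff₀ hq0]; linarith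
  have := mul_le_mul_of_nonneg_left hlow h1
  have e : (p/q-1) * (1 + q * (log q - 1)) = (p/q-1) + (p-q)*(log q - 1) := by field_simp
  rw [e] at this
  linarith

open Real in
lemma tail_eq (s t : ℝ) (hs : 0 < s) :
    IntegrableOn (fun x => exp (-x) * |x - t| ^ s) (Set.Ioi t) ∧
    ∫ x in Set.Ioi t, exp (-x) * |x - t| ^ s = exp (-t) * Gamma (s+1) := by
  have e : ∀ x ∈ Set.Ioi (0:ℝ), exp (-(x+t)) * |x + t - t| ^ s = exp (-t) * (exp (-x) * x^(s+1-1)) := by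
    intro x hx
    have hx : 0 < x := hx
    rw [add_sub_cancel_right, abs_of_pos hx, add_sub_cancel_right, neg_add, exp_add]; ring
  have mp := measurePreserving_add_right (volume : Measure ℝ) t
  have me := measurableEmbedding_addRight t
  have pre : (fun x => x + t) ⁻¹' (Set.Ioi t) = Set.Ioi (0:ℝ) := by
    ext x; simp
  constructor
  · rw [← mp.integrableOn_comp_preimage me, pre]
    refine IntegrableOn.congr_fun ?_ (fun x hx => (e x hx).symm) measurableSet_Ioi
    exact (GammaIntegral_convergent (by linarith)).const_mul _
  · rw [← mp.setIntegral_preimage_emb me, pre, setIntegral_congr_fun measurableSet_Ioi e,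
      integral_const_mul, ← Gamma_eq_integral (by linarith)]

open Real in
lemma head_int (s t : ℝ) (hs : 0 < s) :
    IntegrableOn (fun x => exp (-x) * |x - t| ^ s) (Set.Ioc 0 t) := by
  have : Continuous (fun x : ℝ => exp (-x) * |x - t| ^ s) := by
    apply Continuous.mul (by fun_prop)
    exact Continuous.rpow_const (by fun_prop) (fun x => Or.inr hs.le)
  exact (this.integrableOn_Icc).mono_set Set.Ioc_subset_Icc_self

open Real in
lemma total_eq (s t : ℝ) (hs : 0 < s) (ht : 0 ≤ t) :
    ∫ x in Set.Ioi (0:ℝ), exp (-x) * |x - t| ^ s =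
      (∫ x in Set.Ioc 0 t, exp (-x) * |x - t| ^ s) + exp (-t) * Gamma (s+1) := by
  rw [← (tail_eq s t hs).2, ← setIntegral_union (Set.Ioc_disjoint_Ioi le_rfl) measurableSet_Ioi (head_int s t hs)
    (tail_eq s t hs).1, Set.Ioc_union_Ioi_eq_Ioi ht]

open Real in
lemma head_le (p q t : ℝ) (hq : 0 < q) (hqp : q ≤ p) :
    ∫ x in Set.Ioc 0 t, exp (-x) * |x - t| ^ p ≤ t^(p-q) * ∫ x in Set.Ioc 0 t, exp (-x) * |x - t| ^ q := by
  rw [← integral_const_mul]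
  apply setIntegral_mono_on (head_int p t (by linarith)) ((head_int q t hq).const_mul _) measurableSet_Ioc
  intro x hx
  have h1 : |x - t| ≤ t := by rw [abs_le]; constructor <;> linarith [hx.1, hx.2]
  have h2 : |x-t|^p = |x-t|^(p-q) * |x-t|^q := by
    rw [← rpow_add_of_nonneg (abs_nonneg _) (by linarith) hq.le, sub_add_cancel]
  rw [h2]
  have h3 : |x-t|^(p-q) ≤ t^(p-q) := rpow_le_rpow (abs_nonneg _) h1 (by linarith)
  have := mul_le_mul_of_nonneg_right h3 (by positivity : 0 ≤ exp (-x) * |x-t|^q)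
  linarith

open Real in
lemma t_le (p q t : ℝ) (hq : 2 ≤ q) (hqp : q ≤ p) (ht : 0 ≤ t) (htq : t ≤ q) :
    t^(p-q) ≤ (p/q)^p * Gamma (q+1) ^ (p/q-1) := by
  have hq0 : 0 < q := by linarith
  have hp0 : 0 < p := by linarith
  have hA : 0 < Gamma (q+1) := Gamma_pos_of_pos (by linarith)
  refine (rpow_le_rpow ht htq (by linarith)).trans ?_
  have hlow := gam_low q hq
  rw [← log_le_log_iff (by positivity) hA, log_mul (by positivity) (by positivity), log_rpow (by positivity),
    log_div (by linarith) (by positivity), log_exp] at hlow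
  rw [← log_le_log_iff (by positivity) (by positivity), log_mul (by positivity) (by positivity),
      log_rpow (by positivity), log_rpow (by positivity), log_rpow (by positivity)]
  have h1 : 0 ≤ p/q - 1 := by rw [sub_nonneg, le_div_iff₀ hq0]; linarith
  have := mul_le_mul_of_nonneg_left hlow h1
  have e : (p/q-1) * (1 + q * (log q - 1)) = (p/q-1) + (p-q)*(log q - 1) := by field_simp
  rw [e] at this
  have hl := Real.one_sub_inv_le_log_of_pos (x := p/q) (by positivity)
  have h2 := mul_le_mul_of_nonneg_left hl hp0.le
  have e2 : p * (1 - (p/q)⁻¹) = p - q := by field_simp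
  rw [e2] at h2
  linarith

/-- If `X` is exponential with parameter 1, `t = r q / e`, `2 ≤ q ≤ p ≤ 2q` and
`0 ≤ r ≤ 2 r₀` where `r₀ = e W(1/e)`, then `‖X - t‖_p ≤ C₀ (p/q) ‖X - t‖_q` with
`C₀ = e^{W(1/e)} = 1/r₀`. -/
theorem expShiftNorm_le_of_small_r
    (w : ℝ) (hw : 0 < w) (hwe : w * Real.exp w = Real.exp (-1))
    (p q r t : ℝ) (ht : t = r * q / Real.exp 1)
    (hq : 2 ≤ q) (hqp : q ≤ p) (hp2q : p ≤ 2 * q)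
    (hr0 : 0 ≤ r) (hr : r ≤ 2 * (Real.exp 1 * w)) :
    expShiftNorm p t ≤ Real.exp w * (p / q) * expShiftNorm q t := by
  
  have hq0 : 0 < q := by linarith
  have hp0 : 0 < p := by linarith
  have hA : 0 < Real.Gamma (q+1) := Real.Gamma_pos_of_pos (by linarith)
  have ht0 : 0 ≤ t := by rw [ht]; positivity
  have ht2 : t ≤ 2 * w * q := by
    rw [ht, div_le_iff₀ (Real.exp_pos 1)]
    nlinarith
  have hw2 : w ≤ 1/2 := by
    have h1 : Real.exp (-1) ≤ 1/2 := by linarith [Real.exp_neg_one_lt_d9]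
    nlinarith [Real.add_one_le_exp w]
  have htq : t ≤ q := by nlinarith
  unfold expShiftNorm
  have hT := total_eq q t hq0 ht0
  have hTp := total_eq p t hp0 ht0
  have hB : 0 ≤ ∫ x in Set.Ioc 0 t, Real.exp (-x) * |x - t| ^ q :=
    setIntegral_nonneg measurableSet_Ioc (fun x _ => by positivity)
  have hBp := head_le p q t hq0 hqp
  set J := ∫ x in Set.Ioi (0:ℝ), Real.exp (-x) * |x - t| ^ q
  set K := ∫ x in Set.Ioi (0:ℝ), Real.exp (-x) * |x - t| ^ p with hK
  set B := ∫ x in Set.Ioc 0 t, Real.exp (-x) * |x - t| ^ q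
  set A := Real.Gamma (q+1) with hAdef
  have hJ : 0 < J := by rw [hT]; positivity
  have hK0 : 0 ≤ K := setIntegral_nonneg measurableSet_Ioi (fun x _ => by positivity)
  have hlam : 0 ≤ p/q - 1 := by rw [sub_nonneg, le_div_iff₀ hq0]; linarith
  have h1 : K ≤ (p/q)^p * A^(p/q-1) * J := by
    have g := gam_up p q hq hqp
    have g2 : A^(p/q) = A^(p/q-1) * A := by
      rw [← Real.rpow_add_one hA.ne', sub_add_cancel]
    rw [← hAdef, g2] at g
    have g3 := mul_le_mul_of_nonneg_left g (Real.exp_pos (-t)).le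
    have g4 := mul_le_mul_of_nonneg_right (t_le p q t hq hqp ht0 htq) hB
    rw [hTp, hT]
    linarith
  have hAJ : A ≤ Real.exp t * J := by
    rw [hT, mul_add, ← mul_assoc, ← Real.exp_add]
    have : 0 ≤ Real.exp t * B := by positivity
    simpa using this
  have h2 : K ≤ (p/q)^p * (Real.exp t * J)^(p/q-1) * J := by
    refine h1.trans ?_
    gcongr
  have h3 : K ^ (1/p) ≤ ((p/q)^p * (Real.exp t * J)^(p/q-1) * J)^(1/p) :=
    Real.rpow_le_rpow hK0 h2 (by positivity)
  refine h3.trans ?_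
  rw [← Real.log_le_log_iff (by positivity) (by positivity), Real.log_rpow (by positivity),
    Real.log_mul (by positivity) (by positivity), Real.log_mul (by positivity) (by positivity),
    Real.log_mul (by positivity) (by positivity), Real.log_mul (by positivity) (by positivity),
    Real.log_rpow (by positivity), Real.log_rpow (by positivity), Real.log_rpow (by positivity),
    Real.log_mul (by positivity) (by positivity), Real.log_exp, Real.log_exp]
  have e : 1/p * (p * Real.log (p/q) + (p/q-1) * (t + Real.log J) + Real.log J)
      = Real.log (p/q) + 1/q * Real.log J + t * (p-q) / (p*q) := by
    field_simp; ring
  rw [e]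
  have h4 : t * (p-q) / (p*q) ≤ w := by
    rw [div_le_iff₀ (by positivity)]
    have a1 := mul_le_mul_of_nonneg_right ht2 (by linarith : 0 ≤ p - q)
    have a2 : 0 ≤ w * q * (2*q - p) := mul_nonneg (by positivity) (by linarith)
    linarith
  linarith
end

section
/- Let q ≥ 2, r ≥ 2·e·W(1/e) and t = r·q/e. Then t^{−q}·∫_0^t e^{x−t}·x^q dx ≥ 1/9. -/
/-- If `q ≥ 2`, `r ≥ 2 e W(1/e)` and `t = r q / e`, then
`t^{-q} ∫_0^t e^{x-t} x^q dx ≥ 1/9`. -/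
theorem alpha_ge_one_ninth
    (w : ℝ) (hw : 0 < w) (hwe : w * Real.exp w = Real.exp (-1))
    (q r t : ℝ) (hq : 2 ≤ q) (hr : 2 * (Real.exp 1 * w) ≤ r)
    (ht : t = r * q / Real.exp 1) :
    (1 : ℝ) / 9 ≤ t ^ (-q) * ∫ x in (0 : ℝ)..t, Real.exp (x - t) * x ^ q := by
  have he : 0 < Real.exp 1 := Real.exp_pos 1
  have hw4 : 1 / 4 ≤ w := by
    by_contra! h
    have h1 : w * Real.exp (w + 1) = 1 := by
      rw [Real.exp_add, ← mul_assoc, hwe, ← Real.exp_add]; simp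
    have h2 : Real.exp (w + 1) ≤ Real.exp (5 / 4) := Real.exp_le_exp.mpr (by linarith)
    have h3 : Real.exp (5 / 4) < 4 := by
      have h4 : Real.exp (5 / 4) ^ 4 = Real.exp 1 ^ 5 := by
        rw [← Real.exp_nat_mul, ← Real.exp_nat_mul]; norm_num
      have h5 : Real.exp 1 ^ 5 < 2.7182818286 ^ 5 :=
        pow_lt_pow_left₀ Real.exp_one_lt_d9 he.le (by norm_num)
      refine lt_of_pow_lt_pow_left₀ 4 (by norm_num) ?_
      rw [h4]
      exact h5.trans (by norm_num)
    nlinarith [Real.exp_pos (w + 1)]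
  have htq : q / 2 ≤ t := by
    rw [ht, le_div_iff₀ he]
    nlinarith [mul_le_mul_of_nonneg_right hr (by linarith : (0 : ℝ) ≤ q),
      mul_le_mul_of_nonneg_left hw4 (by positivity : 0 ≤ q * Real.exp 1)]
  have ht1 : 1 ≤ t := by linarith
  have ht0 : 0 < t := by linarith
  have hcont : Continuous fun x : ℝ => Real.exp (x - t) * x ^ q := by
    have : Continuous fun x : ℝ => x ^ q := Real.continuous_rpow_const (by linarith)
    fun_prop
  have hpt : ∀ x ∈ Set.Icc (t - 1) t,
      t ^ q * (x - (t - 1)) ^ 3 ≤ Real.exp (x - t) * x ^ q := by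
    rintro x ⟨hx1, hx2⟩
    have hx0 : 0 ≤ x := by linarith
    have hy : 0 ≤ x - (t - 1) := by linarith
    have hxt : 0 ≤ x / t := by positivity
    have e1 : x - (t - 1) ≤ Real.exp (x - t) := by linarith [Real.add_one_le_exp (x - t)]
    have e2 : x - (t - 1) ≤ (x / t) ^ (q / 2) := by
      have b := one_add_mul_self_le_rpow_one_add (s := x / t - 1) (by linarith)
        (p := q / 2) (by linarith)
      rw [add_sub_cancel] at b
      refine le_trans ?_ b
      have : q / 2 * ((t - x) / t) ≤ t - x := by
        rw [mul_div_assoc', div_le_iff₀ ht0]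
        nlinarith
      have h3 : x / t - 1 = -((t - x) / t) := by field_simp; ring
      rw [h3]; linarith
    have e3 : (x - (t - 1)) ^ 2 ≤ (x / t) ^ q := by
      have : (x / t) ^ q = ((x / t) ^ (q / 2)) ^ 2 := by
        rw [← Real.rpow_mul_natCast hxt]; norm_num
      rw [this]; gcongr
    have e4 : x ^ q = t ^ q * (x / t) ^ q := by
      rw [← Real.mul_rpow ht0.le hxt, mul_div_cancel₀ _ ht0.ne']
    calc t ^ q * (x - (t - 1)) ^ 3 = t ^ q * ((x - (t - 1)) * (x - (t - 1)) ^ 2) := by ring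
      _ ≤ t ^ q * (Real.exp (x - t) * (x / t) ^ q) := by gcongr
      _ = _ := by rw [e4]; ring
  have hI : t ^ q * (1 / 4) ≤ ∫ x in (t - 1)..t, Real.exp (x - t) * x ^ q := by
    have : ∫ x in (t - 1)..t, t ^ q * (x - (t - 1)) ^ 3 = t ^ q * (1 / 4) := by
      rw [intervalIntegral.integral_const_mul,
        intervalIntegral.integral_comp_sub_right (fun x => x ^ 3), integral_pow]
      norm_num
    rw [← this]
    exact intervalIntegral.integral_mono_on (by linarith)
      (Continuous.intervalIntegrable (by fun_prop) _ _) (hcont.intervalIntegrable _ _) hpt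
  have hJ : 0 ≤ ∫ x in (0 : ℝ)..(t - 1), Real.exp (x - t) * x ^ q := by
    refine intervalIntegral.integral_nonneg (by linarith) ?_
    rintro x ⟨hx, -⟩
    positivity
  have hsum := intervalIntegral.integral_add_adjacent_intervals
    (hcont.intervalIntegrable (μ := MeasureTheory.volume) 0 (t - 1))
    (hcont.intervalIntegrable (t - 1) t)
  have hfin : t ^ q * (1 / 4) ≤ ∫ x in (0 : ℝ)..t, Real.exp (x - t) * x ^ q := by linarith
  have hm := mul_le_mul_of_nonneg_left hfin (by positivity : 0 ≤ t ^ (-q))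
  rw [← mul_assoc, ← Real.rpow_add ht0] at hm
  norm_num at hm
  norm_num
  linarith
end

section
/- Let q ≥ 2, 1 ≤ λ ≤ 2, 2r₀ ≤ r ≤ e where r₀ = e·W(1/e), let t = r·q/e, and set α = t^{−q}·∫_0^t e^{x−t}·x^q dx and g(q) = Γ(q+1)·(q/e)^{−q}. Then (α·(r/λ)^{qλ} + √λ·e^{−r·q/e}·g(q))^{1/λ} ≤ C₀^q·(α·r^q + e^{−r·q/e}·g(q)), where C₀ = e^{W(1/e)}. -/
/-- Lower bound for the integral, by comparing with the derivative of `e^{x-t} x^{q+1}`. -/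
lemma aux_int (q t : ℝ) (hq : 2 ≤ q) (ht : 0 < t) :
    t ^ (q + 1) ≤ (t + q + 1) * ∫ x in (0 : ℝ)..t, Real.exp (x - t) * x ^ q := by
  have hc : Continuous fun x : ℝ => Real.exp (x - t) * x ^ q :=
    (by fun_prop : Continuous fun x : ℝ => Real.exp (x - t)).mul
      (Real.continuous_rpow_const (by linarith))
  have hc1 : Continuous fun x : ℝ => Real.exp (x - t) * x ^ (q + 1) :=
    (by fun_prop : Continuous fun x : ℝ => Real.exp (x - t)).mul
      (Real.continuous_rpow_const (by linarith))
  have hc2 : Continuous fun x : ℝ =>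
      Real.exp (x - t) * x ^ (q + 1) + (q + 1) * (Real.exp (x - t) * x ^ q) :=
    hc1.add (continuous_const.mul hc)
  have h1 : ∫ x in (0 : ℝ)..t,
      (Real.exp (x - t) * x ^ (q + 1) + (q + 1) * (Real.exp (x - t) * x ^ q)) = t ^ (q + 1) := by
    rw [intervalIntegral.integral_eq_sub_of_hasDerivAt
      (f := fun x => Real.exp (x - t) * x ^ (q + 1)) _ (hc2.intervalIntegrable _ _)]
    · simp [Real.zero_rpow (by linarith : q + 1 ≠ 0)]
    · intro x _
      have e1 : HasDerivAt (fun x => Real.exp (x - t)) (Real.exp (x - t) * 1) x :=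
        ((hasDerivAt_id x).sub_const t).exp
      have e2 : HasDerivAt (fun x : ℝ => x ^ (q + 1)) ((q + 1) * x ^ (q + 1 - 1)) x :=
        Real.hasDerivAt_rpow_const (Or.inr (by linarith))
      refine (e1.mul e2).congr_deriv ?_
      rw [add_sub_cancel_right]; ring
  rw [← h1, ← intervalIntegral.integral_const_mul]
  apply intervalIntegral.integral_mono_on ht.le (hc2.intervalIntegrable _ _)
    ((continuous_const.mul hc).intervalIntegrable _ _)
  intro x hx
  have hx0 : 0 ≤ x := hx.1
  rw [Real.rpow_add_one' hx0 (by linarith)]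
  have hp : 0 ≤ Real.exp (x - t) * x ^ q := by positivity
  have hm := mul_le_mul_of_nonneg_left hx.2 hp
  change _ ≤ (t + q + 1) * (Real.exp (x - t) * x ^ q)
  linarith

lemma aux_w (w : ℝ) (hw : 0 < w) (hwe : w * Real.exp w = Real.exp (-1)) : 1 / 4 ≤ w := by
  by_contra! h
  have h1 : Real.exp w ≤ Real.exp (1 / 4) := Real.exp_le_exp.2 h.le
  have h2 : w * Real.exp w < 1 / 4 * Real.exp (1 / 4) :=
    mul_lt_mul h h1 (Real.exp_pos _) (by norm_num)
  have h3 : Real.exp (1 / 4) ^ 4 = Real.exp 1 := by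
    rw [← Real.exp_nat_mul]; norm_num
  have h4 := Real.exp_one_lt_d9
  have h5 : Real.exp (1 / 4) < 1.3 := by
    by_contra! h
    have : (1.3 : ℝ) ^ 4 ≤ Real.exp (1 / 4) ^ 4 := pow_le_pow_left₀ (by norm_num) h 4
    norm_num at this h4
    norm_num at h3
    linarith
  have h6 : Real.exp (-1) * Real.exp 1 = 1 := by rw [← Real.exp_add]; simp
  nlinarith [Real.exp_pos (-1), Real.exp_pos 1]

lemma aux_main (q r l a B E : ℝ) (hq : 2 ≤ q) (hl : 1 ≤ l) (hl2 : l ≤ 2) (hr : 0 < r)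
    (ha : 1 / 4 ≤ a) (hB : 0 ≤ B) (hE : 3 / 2 ≤ E) (hER : (2 : ℝ) ^ q ≤ E * r ^ q) :
    a * (r / l) ^ (q * l) + Real.sqrt l * B ≤ (E * (a * r ^ q + B)) ^ l := by
  have hR : 0 < r ^ q := Real.rpow_pos_of_pos hr q
  have h2q : (0 : ℝ) < 2 ^ q := by positivity
  have h4 : (4 : ℝ) ≤ 2 ^ q := by
    calc (4 : ℝ) = 2 ^ (2 : ℝ) := by norm_num
      _ ≤ 2 ^ q := Real.rpow_le_rpow_of_exponent_le (by norm_num) hq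
  have ha' : 1 ≤ a * 2 ^ q := by nlinarith
  have hN : E * (a * r ^ q + B) = a * (E * r ^ q) + E * B := by ring
  have hEB : 0 ≤ E * B := by positivity
  have hX1 : 1 ≤ E * (a * r ^ q + B) := by rw [hN]; nlinarith
  have hX2 : r ^ q / 2 ^ q ≤ E * (a * r ^ q + B) := by
    rw [div_le_iff₀ h2q]
    have : r ^ q * 1 ≤ r ^ q * (a * 2 ^ q) := by gcongr
    have h5 : r ^ q * (a * 2 ^ q) ≤ E * (r ^ q * (a * 2 ^ q)) :=
      le_mul_of_one_le_left (by positivity) (by linarith)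
    nlinarith
  have hpow : (E * (a * r ^ q + B)) ^ l
      = (E * (a * r ^ q + B)) * (E * (a * r ^ q + B)) ^ (l - 1) := by
    rw [← Real.rpow_one_add' (by linarith) (by linarith)]; congr 1; ring
  have hY1 : 1 ≤ (E * (a * r ^ q + B)) ^ (l - 1) := Real.one_le_rpow hX1 (by linarith)
  have hY2 : (r ^ q / 2 ^ q) ^ (l - 1) ≤ (E * (a * r ^ q + B)) ^ (l - 1) :=
    Real.rpow_le_rpow (by positivity) hX2 (by linarith)
  have hll : (2 : ℝ) ^ (l - 1) ≤ l ^ l := by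
    rw [Real.rpow_def_of_pos (by norm_num), Real.rpow_def_of_pos (by linarith), Real.exp_le_exp]
    have g1 := Real.one_sub_inv_le_log_of_pos (by linarith : 0 < l)
    have g2 := Real.log_two_lt_d9
    have g3 : (1 - l⁻¹) * l = l - 1 := by field_simp
    nlinarith
  have hbase : (r / l) ^ l ≤ r * (r / 2) ^ (l - 1) := by
    rw [Real.div_rpow hr.le (by linarith), Real.div_rpow hr.le (by norm_num), ← mul_div_assoc,
      ← Real.rpow_one_add' hr.le (by linarith), show 1 + (l - 1) = l by ring]
    gcongr
  have hlead : (r / l) ^ (q * l) ≤ r ^ q * (r ^ q / 2 ^ q) ^ (l - 1) := by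
    calc (r / l) ^ (q * l) = ((r / l) ^ l) ^ q := by
          rw [mul_comm, Real.rpow_mul (by positivity)]
      _ ≤ (r * (r / 2) ^ (l - 1)) ^ q := Real.rpow_le_rpow (by positivity) hbase (by linarith)
      _ = _ := by
          rw [Real.mul_rpow hr.le (by positivity), ← Real.div_rpow hr.le (by norm_num),
            ← Real.rpow_mul (by positivity), ← Real.rpow_mul (by positivity), mul_comm q]
  have hs : Real.sqrt l ≤ E := by
    rw [Real.sqrt_le_left (by linarith)]; nlinarith
  rw [hpow]
  generalize (E * (a * r ^ q + B)) ^ (l - 1) = Y at *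
  have k1 : a * (r / l) ^ (q * l) ≤ E * (a * (r ^ q * Y)) := by
    have : a * (r / l) ^ (q * l) ≤ a * (r ^ q * Y) := by
      apply mul_le_mul_of_nonneg_left _ (by linarith)
      exact hlead.trans (mul_le_mul_of_nonneg_left hY2 hR.le)
    exact this.trans (le_mul_of_one_le_left (by positivity) (by linarith))
  have k2 : Real.sqrt l * B ≤ E * B * Y :=
    (mul_le_mul_of_nonneg_right hs hB).trans (le_mul_of_one_le_right hEB hY1)
  nlinarith

/-- If `q ≥ 2`, `1 ≤ λ ≤ 2`, `2r₀ ≤ r ≤ e` with `r₀ = e W(1/e)`, `t = r q / e`,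
`α = t^{-q} ∫_0^t e^{x-t} x^q dx` and `g(q) = Γ(q+1) (q/e)^{-q}`, then
`(α (r/λ)^{qλ} + √λ e^{-rq/e} g(q))^{1/λ} ≤ C₀^q (α r^q + e^{-rq/e} g(q))`,
where `C₀ = e^{W(1/e)}`. -/
theorem key_ineq_small_r
    (w : ℝ) (hw : 0 < w) (hwe : w * Real.exp w = Real.exp (-1))
    (q r lam t α : ℝ) (hq : 2 ≤ q)
    (hlam1 : 1 ≤ lam) (hlam2 : lam ≤ 2)
    (hr1 : 2 * (Real.exp 1 * w) ≤ r) (hr2 : r ≤ Real.exp 1)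
    (ht : t = r * q / Real.exp 1)
    (hα : α = t ^ (-q) * ∫ x in (0 : ℝ)..t, Real.exp (x - t) * x ^ q) :
    (α * (r / lam) ^ (q * lam) +
        Real.sqrt lam * Real.exp (-(r * q / Real.exp 1)) *
          (Real.Gamma (q + 1) * (q / Real.exp 1) ^ (-q))) ^ (1 / lam) ≤
      Real.exp w ^ q *
        (α * r ^ q + Real.exp (-(r * q / Real.exp 1)) *
          (Real.Gamma (q + 1) * (q / Real.exp 1) ^ (-q))) := by
  have hw4 := aux_w w hw hwe
  have he1 : Real.exp 1 * (w * Real.exp w) = 1 := by rw [hwe, ← Real.exp_add]; simp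
  have hep := Real.exp_pos 1
  have hr : 0 < r := lt_of_lt_of_le (by positivity) hr1
  have htq : q / 2 ≤ t := by
    rw [ht, le_div_iff₀ hep]
    nlinarith [mul_le_mul_of_nonneg_left hw4 hep.le]
  have ht0 : 0 < t := by linarith
  have ha : 1 / 4 ≤ α := by
    have h := aux_int q t hq ht0
    rw [Real.rpow_add_one ht0.ne'] at h
    have hp : 0 < t ^ q := Real.rpow_pos_of_pos ht0 q
    rw [hα, Real.rpow_neg ht0.le, inv_mul_eq_div, le_div_iff₀ hp]
    generalize (∫ x in (0 : ℝ)..t, Real.exp (x - t) * x ^ q) = I at *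
    have h1 : (t + q + 1) * (1 / 4 * t ^ q) ≤ (t + q + 1) * I := by nlinarith
    exact le_of_mul_le_mul_left h1 (by linarith)
  have hB : 0 ≤ Real.exp (-(r * q / Real.exp 1)) *
      (Real.Gamma (q + 1) * (q / Real.exp 1) ^ (-q)) := by
    have := Real.Gamma_pos_of_pos (by linarith : 0 < q + 1)
    positivity
  have hE : 3 / 2 ≤ Real.exp w ^ q := by
    rw [← Real.exp_mul]
    have := Real.add_one_le_exp (w * q)
    nlinarith
  have hER : (2 : ℝ) ^ q ≤ Real.exp w ^ q * r ^ q := by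
    rw [← Real.mul_rpow (Real.exp_pos w).le hr.le]
    apply Real.rpow_le_rpow (by norm_num) _ (by linarith)
    nlinarith [mul_le_mul_of_nonneg_left hr1 (Real.exp_pos w).le]
  have key := aux_main q r lam α _ _ hq hlam1 hlam2 hr ha hB hE hER
  rw [← mul_assoc] at key
  have hl0 : 0 < lam := by linarith
  have hrp : 0 < r ^ q := Real.rpow_pos_of_pos hr q
  have hM : 0 ≤ Real.exp w ^ q * (α * r ^ q + Real.exp (-(r * q / Real.exp 1)) *
      (Real.Gamma (q + 1) * (q / Real.exp 1) ^ (-q))) :=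
    mul_nonneg (by linarith) (add_nonneg (mul_nonneg (by linarith) hrp.le) hB)
  have hL : 0 ≤ α * (r / lam) ^ (q * lam) +
        Real.sqrt lam * Real.exp (-(r * q / Real.exp 1)) *
          (Real.Gamma (q + 1) * (q / Real.exp 1) ^ (-q)) := by
    apply add_nonneg
    · exact mul_nonneg (by linarith) (by positivity)
    · rw [mul_assoc]; exact mul_nonneg (Real.sqrt_nonneg _) hB
  have := Real.rpow_le_rpow hL key (by positivity : 0 ≤ 1 / lam)
  refine this.trans_eq ?_
  rw [← Real.rpow_mul hM, mul_one_div_cancel hl0.ne', Real.rpow_one]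
end

section
/- Fix q > 0 and let M_q be the unique positive real number satisfying M_q^{q+1} − (q+1)·M_q − q = 0. If X is a random variable with density 1_{[−a,b]}(x)·e^{αx+β} for some a, b > 0, α ≥ 0, β ∈ ℝ, and ‖X‖_q = 1, then b ≤ M_q. -/
open MeasureTheory

/-- Fix `q > 0` and let `M` be the (unique) positive real with
`M^{q+1} - (q+1) M - q = 0`. If `X` is a random variable with density
`1_{[-a,b]}(x) e^{αx+β}` for some `a, b > 0`, `α ≥ 0`, `β ∈ ℝ`, and `‖X‖_q = 1`,
then `b ≤ M`. -/
theorem b_le_M (q M a b α β : ℝ) (hq : 0 < q) (hM : 0 < M)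
    (hMroot : M ^ (q + 1) - (q + 1) * M - q = 0)
    (ha : 0 < a) (hb : 0 < b) (hα : 0 ≤ α)
    (hprob : IsProbabilityMeasure
      (volume.withDensity (fun x => ENNReal.ofReal
        (Set.indicator (Set.Icc (-a) b) (fun x => Real.exp (α * x + β)) x))))
    (hnorm : (∫ x, |x| ^ q
        ∂(volume.withDensity (fun x => ENNReal.ofReal
          (Set.indicator (Set.Icc (-a) b) (fun x => Real.exp (α * x + β)) x)))) ^ (1 / q)
      = 1) :
    b ≤ M := by
  by_contra hcon
  have hbM : M < b := lt_of_not_ge hcon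
  -- M > 1
  have hMq : M ^ (q + 1) = M ^ q * M := by rw [Real.rpow_add hM, Real.rpow_one]
  have hbq : b ^ (q + 1) = b ^ q * b := by rw [Real.rpow_add hb, Real.rpow_one]
  have hM1 : 1 < M := by
    by_contra h
    have : M ^ q ≤ 1 := Real.rpow_le_one hM.le (not_lt.mp h) hq.le
    nlinarith [mul_le_mul_of_nonneg_right this hM.le, mul_pos hq hM]
  have hb1 : 1 < b := hM1.trans hbM
  have hbpos : 0 < b ^ (q + 1) - (q + 1) * b - q := by
    have h1 : M ^ q ≤ b ^ q := Real.rpow_le_rpow hM.le hbM.le hq.le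
    have h2 : M * (M ^ q - (q + 1)) = q := by linarith
    have h3 : 0 < M ^ q - (q + 1) := by
      by_contra h
      nlinarith
    have h4 : q < b * (M ^ q - (q + 1)) := by nlinarith
    nlinarith
  set w : ℝ → ℝ := fun x => Real.exp (α * x + β) with hw
  set μ := volume.withDensity (fun x => ENNReal.ofReal
        (Set.indicator (Set.Icc (-a) b) w x)) with hμ
  have hI0 : 0 ≤ ∫ x, |x| ^ q ∂μ := integral_nonneg fun x => by positivity
  have hI : ∫ x, |x| ^ q ∂μ = 1 := by
    have h := congrArg (fun t : ℝ => t ^ q) hnorm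
    simpa [← Real.rpow_mul hI0, hq.ne'] using h
  have hint : Integrable (fun x : ℝ => |x| ^ q) μ := by
    by_contra h
    rw [integral_undef h] at hI
    exact zero_ne_one hI
  have hzero : ∫ x, (|x| ^ q - 1) ∂μ = 0 := by
    rw [integral_sub hint (integrable_const _), hI]
    simp
  have hwc : Continuous w := by fun_prop
  have hwm : Measurable (Set.indicator (Set.Icc (-a) b) w) :=
    hwc.measurable.indicator measurableSet_Icc
  have hw0 : ∀ x, 0 ≤ Set.indicator (Set.Icc (-a) b) w x := fun x =>
    Set.indicator_nonneg (fun x _ => (Real.exp_pos _).le) x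
  have hfc : Continuous (fun x : ℝ => |x| ^ q - 1) :=
    (continuous_abs.rpow_const (fun _ => Or.inr hq.le)).sub continuous_const
  rw [hμ, integral_withDensity_eq_integral_toReal_smul hwm.ennreal_ofReal
    (by simp)] at hzero
  have hzero' : ∫ x, Set.indicator (Set.Icc (-a) b) (fun x => w x * (|x| ^ q - 1)) x = 0 := by
    rw [← hzero]
    congr 1
    ext x
    rw [ENNReal.toReal_ofReal (hw0 x), smul_eq_mul]
    by_cases hx : x ∈ Set.Icc (-a) b <;> simp [hx]
  have hmono : ∫ x, Set.indicator (Set.Icc (-1) b) (fun x => w 1 * (|x| ^ q - 1)) x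
      ≤ ∫ x, Set.indicator (Set.Icc (-a) b) (fun x => w x * (|x| ^ q - 1)) x := by
    apply integral_mono
    · exact ((continuous_const.mul hfc).continuousOn.integrableOn_Icc).integrable_indicator
        measurableSet_Icc
    · exact ((hwc.mul hfc).continuousOn.integrableOn_Icc).integrable_indicator
        measurableSet_Icc
    · intro x
      have hwpos : ∀ y, 0 < w y := fun y => Real.exp_pos _
      have hneg : |x| ≤ 1 → |x| ^ q - 1 ≤ 0 := fun h =>
        sub_nonpos.mpr (Real.rpow_le_one (abs_nonneg x) h hq.le)
      have hpos : 1 ≤ |x| → 0 ≤ |x| ^ q - 1 := fun h =>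
        sub_nonneg.mpr (Real.one_le_rpow h hq.le)
      have hle : x ≤ 1 → w x ≤ w 1 := fun h => Real.exp_le_exp.mpr (by nlinarith)
      have hge : 1 ≤ x → w 1 ≤ w x := fun h => Real.exp_le_exp.mpr (by nlinarith)
      by_cases h1 : x ∈ Set.Icc (-1) b
      · by_cases h2 : x ∈ Set.Icc (-a) b
        · simp only [Set.indicator_of_mem h1, Set.indicator_of_mem h2]
          rcases le_total x 1 with h | h
          · have := hneg (abs_le.mpr ⟨h1.1, h⟩)
            exact mul_le_mul_of_nonpos_right (hle h) this
          · have := hpos (h.trans (le_abs_self x))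
            exact mul_le_mul_of_nonneg_right (hge h) this
        · simp only [Set.indicator_of_mem h1, Set.indicator_of_notMem h2]
          have hxa : x < -a := by
            by_contra h
            exact h2 ⟨not_lt.mp h, h1.2⟩
          have := hneg (abs_le.mpr ⟨h1.1, by linarith⟩)
          exact mul_nonpos_of_nonneg_of_nonpos (hwpos 1).le this
      · simp only [Set.indicator_of_notMem h1]
        refine Set.indicator_apply_nonneg ?_
        intro h2
        have hx1 : x < -1 := by
          by_contra h
          exact h1 ⟨not_lt.mp h, h2.2⟩
        exact mul_nonneg (hwpos x).le (hpos (by rw [abs_of_neg (by linarith)]; linarith))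
  have hval : ∫ x, Set.indicator (Set.Icc (-1) b) (fun x => w 1 * (|x| ^ q - 1)) x
      = w 1 * ((b ^ (q + 1) - (q + 1) * b - q) / (q + 1)) := by
    rw [integral_indicator measurableSet_Icc, integral_Icc_eq_integral_Ioc,
      ← intervalIntegral.integral_of_le (by linarith), intervalIntegral.integral_const_mul]
    congr 1
    have hpc : Continuous (fun x : ℝ => |x| ^ q) :=
      continuous_abs.rpow_const (fun _ => Or.inr hq.le)
    have hp : ∀ c : ℝ, 0 ≤ c → ∫ x in (0:ℝ)..c, |x| ^ q = c ^ (q + 1) / (q + 1) := by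
      intro c hc
      have : ∫ x in (0:ℝ)..c, |x| ^ q = ∫ x in (0:ℝ)..c, x ^ q := by
        apply intervalIntegral.integral_congr
        intro x hx
        rw [Set.uIcc_of_le hc] at hx
        simp only [abs_of_nonneg hx.1]
      rw [this, integral_rpow (Or.inl (by linarith)), Real.zero_rpow (by linarith), sub_zero]
    have hn : ∫ x in (-1:ℝ)..0, |x| ^ q = ∫ x in (0:ℝ)..1, |x| ^ q := by
      have := intervalIntegral.integral_comp_neg (a := 0) (b := 1) (fun x : ℝ => |x| ^ q)
      simp only [abs_neg, neg_zero] at this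
      exact this.symm
    rw [intervalIntegral.integral_sub (hpc.intervalIntegrable _ _)
      (continuous_const.intervalIntegrable _ _),
      ← intervalIntegral.integral_add_adjacent_intervals (b := 0)
        (hpc.intervalIntegrable _ _) (hpc.intervalIntegrable _ _), hn, hp 1 zero_le_one,
      hp b hb.le, intervalIntegral.integral_const, Real.one_rpow]
    have : q + 1 ≠ 0 := by linarith
    simp only [smul_eq_mul]
    field_simp
    ring
  rw [hval, hzero'] at hmono
  have : 0 < w 1 * ((b ^ (q + 1) - (q + 1) * b - q) / (q + 1)) :=
    mul_pos (Real.exp_pos _) (div_pos hbpos (by linarith))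
  linarith
end
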